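/- arXiv:2305.18796 — 4 statements merged into one kernel-verified Lean document; each statement's English description precedes it below -/
import Mathlib

section
/- Let (G_i)_{i∈ℕ} be a family of finitely generated abelian groups. Then there exists a Dedekind domain D that is not a field with the following properties: (1) Cl(D) is isomorphic to the direct sum ⊕_{i∈ℕ} G_i; (2) for each i ∈ ℕ there is a multiplicative submonoid S_i ⊆ D ∖ {0} such that the localization D_{S_i} (which is again a Dedekind domain) satisfies Cl(D_{S_i}) ≅ G_i; (3) every class of Cl(D) contains infinitely many nonzero prime ideals of D, and for each i ∈ ℕ every class of Cl(D_{S_i}) contains infinitely many nonzero prime ideals of D_{S_i}. -/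
open scoped DirectSum nonZeroDivisors

/-!
If a unique factorization domain `A` is strongly graded by a torsion-free abelian group `Γ`, with
all units in degree zero, then a homogeneous `f ≠ 0` gives the ideal `fA ∩ A₀` of `A₀`, these ideals
multiply like their generators, and two of them are in the same class exactly when their generators
have the same degree. Hence `Cl(A₀) ≅ Γ` as soon as every nonzero prime of `A₀` is `pA ∩ A₀` for a
homogeneous prime `p`. To arrange this, start from the polynomial ring in countably many variables
of each degree and invert all polynomials whose divisors are all homogeneous of degree zero: for a
homogeneous `p` and `b` of degree zero without common factor, `p * X + b` is prime for a fresh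
variable `X` of degree `-deg p`, so it becomes a unit. The variables of degree `γ` provide
infinitely many prime ideals in each class `γ ≠ 0`.

By Nagata's theorem, any quotient of a class group by a subgroup whose nontrivial classes contain
primes is the class group of a localization. Applied to `ℤ^(A) → A` this realizes every abelian
group `A` with infinitely many primes in every class, and applied to the projections
`⨁ i, G i → G i` it yields the localizations.
-/

universe u v

section ClassGroupLocalization

open ClassGroup

/-- The set of nonzero prime ideals of `D` in the ideal class `g`. -/
def primesInClass (D : Type*) [CommRing D] [IsDedekindDomain D] (g : ClassGroup D) :
    Set (Ideal D)⁰ :=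
  {P | (P : Ideal D).IsPrime ∧ mk0 P = g}

variable {D : Type*} [CommRing D] [IsDedekindDomain D]

theorem not_isField_of_primesInClass_nonempty {g : ClassGroup D}
    (h : (primesInClass D g).Nonempty) : ¬ IsField D := by
  obtain ⟨P, hP, -⟩ := h
  exact Ring.not_isField_iff_exists_prime.2 ⟨P, nonZeroDivisors.ne_zero P.2, hP⟩

theorem mk0_mem_closure_primes {I : (Ideal D)⁰} {s : D} (hs : s ∈ (I : Ideal D)) :
    mk0 I ∈ Subgroup.closure
      (mk0 '' {P : (Ideal D)⁰ | (P : Ideal D).IsPrime ∧ s ∈ (P : Ideal D)}) := by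
  obtain ⟨I, hI⟩ := I
  induction I using UniqueFactorizationMonoid.induction_on_prime with
  | h₁ => exact absurd rfl (nonZeroDivisors.ne_zero hI)
  | h₂ I hunit =>
    rw [(mk0_eq_one_iff hI).2 (Ideal.isUnit_iff.1 hunit ▸ top_isPrincipal)]
    exact one_mem _
  | h₃ I P hI0 hP ih =>
    have hmem : s ∈ P ∧ s ∈ I := Ideal.mul_le_inf hs
    have hP0 := mem_nonZeroDivisors_of_ne_zero hP.ne_zero
    have hI0' := mem_nonZeroDivisors_of_ne_zero hI0
    exact map_mul mk0 ⟨P, hP0⟩ ⟨I, hI0'⟩ ▸ mul_mem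
      (Subgroup.subset_closure ⟨⟨P, hP0⟩, ⟨Ideal.isPrime_of_prime hP, hmem.1⟩, rfl⟩)
      (ih hI0' hmem.2)

variable (S : Submonoid D) (E : Type*) [CommRing E] [IsDedekindDomain E] [Algebra D E]
  [Module.IsTorsionFree D E] [IsLocalization S E]

include S in
theorem extendedHom_surjective_of_isLocalization :
    Function.Surjective (extendedHom D E) := by
  intro c
  obtain ⟨J, rfl⟩ := mk0_surjective c
  have hmap : ((J : Ideal E).under D).map (algebraMap D E) = J := IsLocalization.map_under S E J
  have hne : (J : Ideal E).under D ≠ ⊥ := fun h =>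
    nonZeroDivisors.ne_zero J.2 (by rw [← hmap, h, Ideal.map_bot, Ideal.zero_eq_bot])
  refine ⟨mk0 ⟨_, mem_nonZeroDivisors_of_ne_zero hne⟩, ?_⟩
  rw [extendedHom_mk0]
  exact congrArg mk0 (Subtype.ext hmap)

theorem extendedHom_mk0_eq_one_of_not_disjoint {I : (Ideal D)⁰}
    (h : ¬ Disjoint (S : Set D) (I : Ideal D)) : extendedHom D E (mk0 I) = 1 := by
  rw [extendedHom_mk0, mk0_eq_one_iff,
    not_not.1 (mt (IsLocalization.map_algebraMap_ne_top_iff_disjoint S E I).1 h)]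
  exact top_isPrincipal

theorem exists_not_disjoint_and_mk0_eq_inv {I : (Ideal D)⁰}
    (h : extendedHom D E (mk0 I) = 1) :
    ∃ J : (Ideal D)⁰, ¬ Disjoint (S : Set D) (J : Ideal D) ∧ mk0 I = (mk0 J)⁻¹ := by
  rw [extendedHom_mk0, mk0_eq_one_iff] at h
  obtain ⟨b, hb⟩ := h
  have hbI : b ∈ (I : Ideal D).map (algebraMap D E) := hb ▸ Submodule.mem_span_singleton_self b
  obtain ⟨⟨a, s⟩, has⟩ := (IsLocalization.mem_map_algebraMap_iff S E).1 hbI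
  have hmap : (Ideal.span {(a : D)}).map (algebraMap D E) = (I : Ideal D).map (algebraMap D E) := by
    rw [Ideal.map_span, Set.image_singleton, hb, ← has]
    exact Ideal.span_singleton_mul_right_unit (IsLocalization.map_units E s) b
  obtain ⟨J, hJ⟩ := Ideal.dvd_span_singleton.2 a.2
  have hI0 : (I : Ideal D).map (algebraMap D E) ≠ 0 :=
    nonZeroDivisors.ne_zero (extendedIdeal D E I).2
  have hJtop : J.map (algebraMap D E) = ⊤ := by
    rw [hJ, Ideal.map_mul] at hmap
    exact mul_left_cancel₀ hI0 (hmap.trans (Ideal.mul_top _).symm)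
  have hJ0 : J ≠ 0 := by
    rintro rfl
    rw [Ideal.zero_eq_bot, Ideal.map_bot] at hJtop
    exact bot_ne_top hJtop
  have ha0 : (a : D) ≠ 0 := by
    intro ha
    rw [ha, Ideal.span_singleton_zero, Ideal.map_bot] at hmap
    exact hI0 hmap.symm
  exact ⟨⟨J, mem_nonZeroDivisors_of_ne_zero hJ0⟩,
    fun hdisj => (IsLocalization.map_algebraMap_ne_top_iff_disjoint S E J).2 hdisj hJtop,
    mk0_eq_mk0_inv_iff.2 ⟨a, ha0, hJ.symm⟩⟩

/-- Nagata's theorem. -/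
theorem ker_extendedHom_eq_closure :
    (extendedHom D E).ker = Subgroup.closure (mk0 '' {P : (Ideal D)⁰ |
      (P : Ideal D).IsPrime ∧ ¬ Disjoint (S : Set D) (P : Ideal D)}) := by
  refine le_antisymm (fun c hc => ?_) ((Subgroup.closure_le _).2 ?_)
  · obtain ⟨I, rfl⟩ := mk0_surjective c
    obtain ⟨J, hJ, hIJ⟩ := exists_not_disjoint_and_mk0_eq_inv S E hc
    obtain ⟨s, hsS, hsJ⟩ := Set.not_disjoint_iff.1 hJ
    rw [hIJ]
    refine inv_mem (Subgroup.closure_mono (Set.image_mono ?_) (mk0_mem_closure_primes hsJ))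
    exact fun P hP => ⟨hP.1, Set.not_disjoint_iff.2 ⟨s, hsS, hP.2⟩⟩
  · rintro _ ⟨P, hP, rfl⟩
    exact extendedHom_mk0_eq_one_of_not_disjoint S E hP.2

theorem infinite_primesInClass_extendedHom {g : ClassGroup D}
    (h : (primesInClass D g ∩ {P | Disjoint (S : Set D) (P : Ideal D)}).Infinite) :
    (primesInClass E (extendedHom D E g)).Infinite := by
  refine (h.image (f := extendedIdeal D E) ?_).mono ?_
  · rintro P ⟨⟨hP, -⟩, hPS⟩ Q ⟨⟨hQ, -⟩, hQS⟩ hPQ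
    have hunder := congrArg (Ideal.under D ∘ Subtype.val) hPQ
    exact Subtype.ext <| (IsLocalization.under_map_of_isPrime_disjoint S E hP hPS).symm.trans <|
      hunder.trans <| IsLocalization.under_map_of_isPrime_disjoint S E hQ hQS
  · rintro _ ⟨P, ⟨⟨hP, rfl⟩, hPS⟩, rfl⟩
    exact ⟨IsLocalization.isPrime_of_isPrime_disjoint S E P hP hPS, (extendedHom_mk0 D E P).symm⟩

/-- The multiplicative set of nonzero elements of `D` whose prime ideal factors all lie in `T`. -/
def primeSupported (T : Set (Ideal D)⁰) : Submonoid D where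
  carrier := {a | a ≠ 0 ∧ ∀ P : (Ideal D)⁰, (P : Ideal D).IsPrime → a ∈ (P : Ideal D) → P ∈ T}
  one_mem' := ⟨one_ne_zero, fun _ hP h => absurd h hP.one_notMem⟩
  mul_mem' := fun ha hb => ⟨mul_ne_zero ha.1 hb.1, fun P hP h =>
    (hP.mem_or_mem h).elim (ha.2 P hP) (hb.2 P hP)⟩

theorem primeSupported_le_nonZeroDivisors (T : Set (Ideal D)⁰) : primeSupported T ≤ D⁰ :=
  fun _ ha => mem_nonZeroDivisors_of_ne_zero ha.1

theorem mem_of_not_disjoint_primeSupported {T : Set (Ideal D)⁰} {P : (Ideal D)⁰}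
    (hP : (P : Ideal D).IsPrime) (h : ¬ Disjoint (primeSupported T : Set D) (P : Ideal D)) :
    P ∈ T := by
  obtain ⟨s, hs, hsP⟩ := Set.not_disjoint_iff.1 h
  exact hs.2 P hP hsP

theorem not_disjoint_primeSupported {T : Set (Ideal D)⁰} {P Q : (Ideal D)⁰}
    (hP : (P : Ideal D).IsPrime) (hQ : (Q : Ideal D).IsPrime) (hPT : P ∈ T) (hQT : Q ∈ T)
    (hPQ : mk0 P = (mk0 Q)⁻¹) : ¬ Disjoint (primeSupported T : Set D) (P : Ideal D) := by
  obtain ⟨x, hx0, hx⟩ := mk0_eq_mk0_inv_iff.1 hPQ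
  have hxPQ : x ∈ (P : Ideal D) * Q := hx ▸ Ideal.mem_span_singleton_self x
  have eq_of_le : ∀ {P' R : (Ideal D)⁰}, (P' : Ideal D).IsPrime → (R : Ideal D).IsPrime →
      (P' : Ideal D) ≤ R → P' = R := fun {P' R} hP' hR hle =>
    Subtype.ext ((hP'.isMaximal (nonZeroDivisors.ne_zero P'.2)).eq_of_le hR.ne_top hle)
  refine Set.not_disjoint_iff.2 ⟨x, ⟨hx0, fun R hR hxR => ?_⟩, (Ideal.mul_le_inf hxPQ).1⟩
  rw [← Ideal.span_singleton_le_iff_mem, ← hx] at hxR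
  rcases hR.mul_le.1 hxR with h | h
  · exact eq_of_le hP hR h ▸ hPT
  · exact eq_of_le hQ hR h ▸ hQT

theorem ker_extendedHom_primeSupported {H : Subgroup (ClassGroup D)}
    {P : ClassGroup D → (Ideal D)⁰} (hP : ∀ g ∈ H, g ≠ 1 → P g ∈ primesInClass D g)
    (E : Type*) [CommRing E] [IsDedekindDomain E] [Algebra D E] [Module.IsTorsionFree D E]
    [IsLocalization (primeSupported (P '' (H \ {1}))) E] :
    (extendedHom D E).ker = H := by
  have hmem : ∀ g ∈ H, g ≠ 1 → P g ∈ P '' (H \ {1}) := fun g hg hg1 => ⟨g, ⟨hg, hg1⟩, rfl⟩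
  rw [ker_extendedHom_eq_closure (primeSupported (P '' (H \ {1}))) E]
  refine le_antisymm ((Subgroup.closure_le _).2 ?_) fun g hg => ?_
  · rintro _ ⟨Q, ⟨hQ, hQS⟩, rfl⟩
    obtain ⟨g, ⟨hg, hg1⟩, rfl⟩ := mem_of_not_disjoint_primeSupported hQ hQS
    rw [SetLike.mem_coe, (hP g hg hg1).2]
    exact hg
  · by_cases hg1 : g = 1
    · rw [hg1]
      exact one_mem _
    obtain ⟨hprime, hclass⟩ := hP g hg hg1
    obtain ⟨hprime', hclass'⟩ := hP g⁻¹ (inv_mem hg) (inv_ne_one.2 hg1)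
    exact Subgroup.subset_closure ⟨P g, ⟨hprime, not_disjoint_primeSupported hprime hprime'
      (hmem g hg hg1) (hmem g⁻¹ (inv_mem hg) (inv_ne_one.2 hg1))
      (by rw [hclass, hclass', inv_inv])⟩, hclass⟩

-- Inverting one prime from each nontrivial class of `ker φ` kills exactly `ker φ`, since the
-- product of the chosen primes of two inverse classes is principal.
theorem exists_localization_classGroup_mulEquiv {A : Type*} [CommGroup A] (φ : ClassGroup D →* A)
    (hker : ∀ g, φ g = 1 → g ≠ 1 → (primesInClass D g).Nonempty)
    (hinf : ∀ a, ∃ g, φ g = a ∧ (primesInClass D g).Infinite) :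
    ∃ (S : Submonoid D) (_ : S ≤ D⁰) (_ : IsDedekindDomain (Localization S)),
      Nonempty (ClassGroup (Localization S) ≃* A) ∧
        ∀ g, (primesInClass (Localization S) g).Infinite := by
  have hφ : Function.Surjective φ := fun a => (hinf a).imp fun _ => And.left
  choose! P hP using hker
  let S := primeSupported (P '' (φ.ker \ {1}))
  have hS : S ≤ D⁰ := primeSupported_le_nonZeroDivisors _
  have : IsDomain (Localization S) := IsLocalization.isDomain_localization hS
  have : IsDedekindDomain (Localization S) := IsLocalization.isDedekindDomain D hS _
  have : FaithfulSMul D (Localization S) :=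
    (faithfulSMul_iff_algebraMap_injective _ _).2 (IsLocalization.injective _ hS)
  let ε := extendedHom D (Localization S)
  have hε : Function.Surjective ε := extendedHom_surjective_of_isLocalization S _
  have hker : ε.ker = φ.ker := ker_extendedHom_primeSupported (H := φ.ker) hP _
  refine ⟨S, hS, ‹_›, ⟨(QuotientGroup.quotientKerEquivOfSurjective ε hε).symm.trans <|
    (QuotientGroup.quotientMulEquivOfEq hker).trans <|
      QuotientGroup.quotientKerEquivOfSurjective φ hφ⟩, fun c => ?_⟩
  obtain ⟨g', rfl⟩ := hε c
  obtain ⟨g, hg, hginf⟩ := hinf (φ g')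
  have hgg' : ε g = ε g' := by rwa [MonoidHom.eq_iff, hker, ← MonoidHom.eq_iff]
  rw [← hgg']
  refine infinite_primesInClass_extendedHom S _ ((hginf.sdiff (Set.finite_singleton (P g))).mono ?_)
  rintro Q ⟨⟨hQ, rfl⟩, hQP⟩
  refine ⟨⟨hQ, rfl⟩, not_not.1 fun hdisj => hQP ?_⟩
  obtain ⟨k, ⟨hk, hk1⟩, rfl⟩ := mem_of_not_disjoint_primeSupported hQ hdisj
  rw [(hP k hk hk1).2, Set.mem_singleton_iff]

end ClassGroupLocalization

section HomogeneousDivisors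

open DirectSum

variable {Γ R A : Type*} [AddCommGroup Γ] [DecidableEq Γ] [CommRing R] [CommRing A]
  [Algebra R A] {𝒜 : Γ → Submodule R A} [GradedAlgebra 𝒜]

theorem decompose_mul_apply_of_uniqueAdd [∀ (i : Γ) (x : 𝒜 i), Decidable (x ≠ 0)] {a b : A}
    {γ δ : Γ} (hγ : γ ∈ (decompose 𝒜 a).support) (hδ : δ ∈ (decompose 𝒜 b).support)
    (h : UniqueAdd (decompose 𝒜 a).support (decompose 𝒜 b).support γ δ) :
    (decompose 𝒜 (a * b) (γ + δ) : A) = decompose 𝒜 a γ * decompose 𝒜 b δ := by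
  rw [decompose_mul, coe_mul_apply]
  refine Finset.sum_eq_single_of_mem (γ, δ) (by simp only [Finset.mem_filter, Finset.mem_product,
    hγ, hδ, and_self]) ?_
  rintro ⟨i, j⟩ hij hne
  simp only [Finset.mem_filter, Finset.mem_product] at hij
  obtain ⟨rfl, rfl⟩ := h hij.1.1 hij.1.2 hij.2
  exact absurd rfl hne

variable [IsDomain A]

theorem mem_graded_sub_of_mul_mem {γ δ : Γ} {a b : A} (ha : a ∈ 𝒜 γ) (ha0 : a ≠ 0)
    (hab : a * b ∈ 𝒜 δ) : b ∈ 𝒜 (δ - γ) := by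
  have hcomp : (decompose 𝒜 b (δ - γ) : A) = b := by
    apply mul_left_cancel₀ ha0
    rw [← coe_decompose_mul_add_of_left_mem 𝒜 ha, add_sub_cancel, decompose_of_mem_same 𝒜 hab]
  exact hcomp ▸ SetLike.coe_mem _

-- Two unique sums of degrees would give two distinct nonzero components of the product.
theorem exists_mem_graded_of_mul_mem [TwoUniqueSums Γ] {γ : Γ} {a b : A} (hab : a * b ∈ 𝒜 γ)
    (hab0 : a * b ≠ 0) : ∃ δ, a ∈ 𝒜 δ := by
  classical
  have degree_eq : ∀ i ∈ (decompose 𝒜 a).support, ∀ j ∈ (decompose 𝒜 b).support,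
      UniqueAdd (decompose 𝒜 a).support (decompose 𝒜 b).support i j → i + j = γ := by
    intro i hi j hj huniq
    by_contra hne
    have hprod := decompose_mul_apply_of_uniqueAdd hi hj huniq
    rw [decompose_of_mem_ne 𝒜 hab (Ne.symm hne), eq_comm, mul_eq_zero, ZeroMemClass.coe_eq_zero,
      ZeroMemClass.coe_eq_zero] at hprod
    exact hprod.elim (DFinsupp.mem_support_iff.1 hi) (DFinsupp.mem_support_iff.1 hj)
  have support_nonempty : ∀ c : A, c ≠ 0 → (decompose 𝒜 c).support.Nonempty := fun c hc =>
    Finset.nonempty_iff_ne_empty.2 fun h => hc <|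
      (decompose 𝒜).injective ((DFinsupp.support_eq_empty.1 h).trans (decompose_zero 𝒜).symm)
  have hb := (support_nonempty b (right_ne_zero_of_mul hab0)).card_pos
  have hcard : (decompose 𝒜 a).support.card ≤ 1 := by
    by_contra! hlt
    obtain ⟨p, hp, q, hq, hpq, hpu, hqu⟩ :=
      TwoUniqueSums.uniqueAdd_of_one_lt_card (Nat.one_lt_mul_iff.2 ⟨by lia, hb, Or.inl hlt⟩)
    rw [Finset.mem_product] at hp hq
    have heq := hqu hp.1 hp.2
      ((degree_eq _ hp.1 _ hp.2 hpu).trans (degree_eq _ hq.1 _ hq.2 hqu).symm)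
    exact hpq (Prod.ext heq.1 heq.2)
  obtain ⟨δ, hδ⟩ := support_nonempty a (left_ne_zero_of_mul hab0)
  refine ⟨δ, ?_⟩
  rw [← sum_support_decompose 𝒜 a]
  exact sum_mem fun i hi => Finset.card_le_one.1 hcard i hi δ hδ ▸ SetLike.coe_mem _

end HomogeneousDivisors

section IntegrallyClosed

theorem isIntegrallyClosed_of_dvd_of_algebraMap_dvd (B A : Type*) [CommRing B] [IsDomain B]
    [CommRing A] [IsDomain A] [IsIntegrallyClosed A] [Algebra B A] [FaithfulSMul B A]
    (h : ∀ a b : B, algebraMap B A b ∣ algebraMap B A a → b ∣ a) : IsIntegrallyClosed B := by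
  rw [isIntegrallyClosed_iff (FractionRing B)]
  intro x hx
  obtain ⟨a, b, hb, rfl⟩ := IsFractionRing.div_surjective (A := B) x
  have hinj : Function.Injective (algebraMap B (FractionRing A)) := by
    rw [IsScalarTower.algebraMap_eq B A (FractionRing A)]
    exact (IsFractionRing.injective A (FractionRing A)).comp (FaithfulSMul.algebraMap_injective B A)
  let ψ : FractionRing B →ₐ[B] FractionRing A :=
    IsFractionRing.liftAlgHom (g := Algebra.ofId B (FractionRing A)) hinj
  have hb0 : algebraMap B (FractionRing A) b ≠ 0 :=
    (map_ne_zero_iff _ hinj).2 (nonZeroDivisors.ne_zero hb)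
  obtain ⟨c, hc⟩ := (isIntegrallyClosed_iff (FractionRing A)).1 ‹_› (hx.map ψ).tower_top
  rw [map_div₀, AlgHom.commutes, AlgHom.commutes, eq_div_iff hb0,
    IsScalarTower.algebraMap_apply B A (FractionRing A),
    IsScalarTower.algebraMap_apply B A (FractionRing A), ← map_mul] at hc
  obtain ⟨d, rfl⟩ := h a b ⟨c, (IsFractionRing.injective A _ hc).symm.trans (mul_comm c _)⟩
  refine ⟨d, ?_⟩
  rw [map_mul, mul_div_cancel_left₀]
  exact IsFractionRing.to_map_ne_zero_of_mem_nonZeroDivisors hb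

end IntegrallyClosed

section DegreeZeroPart

open ClassGroup

variable {Γ R A : Type*} [AddCommGroup Γ] [CommRing R] [CommRing A] [Algebra R A]

/-- Gradings whose degree zero part is a Dedekind domain with class group `Γ`, provided that `A` is
a unique factorization domain and `Γ` has two unique sums. The first axiom says that the grading is
strong, and the last one that a homogeneous prime `p` generates an ideal whose degree zero part is
maximal. -/
structure IsDedekindGrading (𝒜 : Γ → Submodule R A) : Prop where
  one_mem_mul : ∀ γ, 1 ∈ 𝒜 γ * 𝒜 (-γ)
  mem_zero_of_isUnit : ∀ u, IsUnit u → u ∈ 𝒜 0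
  exists_isUnit_mul_add : ∀ γ, ∀ p ∈ 𝒜 γ, Prime p → ∀ b ∈ 𝒜 0, ¬ p ∣ b →
    ∃ h ∈ 𝒜 (-γ), IsUnit (p * h + b)

namespace IsDedekindGrading

variable {𝒜 : Γ → Submodule R A} (h𝒜 : IsDedekindGrading 𝒜)

include h𝒜

theorem one_mem_neg_mul (γ : Γ) : 1 ∈ 𝒜 (-γ) * 𝒜 γ :=
  mul_comm (𝒜 γ) _ ▸ h𝒜.one_mem_mul γ

theorem exists_mem_ne_zero [Nontrivial A] (γ : Γ) : ∃ f ∈ 𝒜 γ, f ≠ 0 := by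
  by_contra! h
  have h1 := h𝒜.one_mem_mul γ
  rw [(Submodule.eq_bot_iff _).2 h, Submodule.bot_mul] at h1
  exact one_ne_zero h1

end IsDedekindGrading

variable [DecidableEq Γ]

/-- The degree zero part `fA ∩ 𝒜 0` of the principal ideal generated by `f`, as an ideal of the
degree zero subring. -/
def degreeZeroSpan (𝒜 : Γ → Submodule R A) [GradedAlgebra 𝒜] (f : A) : Ideal (𝒜 0) :=
  (Ideal.span {f}).comap (algebraMap (𝒜 0) A)

variable {𝒜 : Γ → Submodule R A} [GradedAlgebra 𝒜]

theorem mem_degreeZeroSpan {f : A} {z : 𝒜 0} : z ∈ degreeZeroSpan 𝒜 f ↔ f ∣ (z : A) := by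
  rw [degreeZeroSpan, Ideal.mem_comap, Ideal.mem_span_singleton, SetLike.GradeZero.algebraMap_apply]

theorem degreeZeroSpan_le_of_dvd {f g : A} (h : g ∣ f) :
    degreeZeroSpan 𝒜 f ≤ degreeZeroSpan 𝒜 g := fun _ hz =>
  mem_degreeZeroSpan.2 (h.trans (mem_degreeZeroSpan.1 hz))

theorem degreeZeroSpan_mul_le (f g : A) :
    degreeZeroSpan 𝒜 f * degreeZeroSpan 𝒜 g ≤ degreeZeroSpan 𝒜 (f * g) :=
  Ideal.mul_le.2 fun _ hr _ hs => mem_degreeZeroSpan.2 <|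
    mul_dvd_mul (mem_degreeZeroSpan.1 hr) (mem_degreeZeroSpan.1 hs)

theorem degreeZeroSpan_isPrime {p : A} (hp : Prime p) : (degreeZeroSpan 𝒜 p).IsPrime :=
  have := (Ideal.span_singleton_prime hp.ne_zero).2 hp
  Ideal.comap_isPrime _ _

theorem degreeZeroSpan_eq_top_of_isUnit {u : A} (hu : IsUnit u) : degreeZeroSpan 𝒜 u = ⊤ :=
  (Ideal.eq_top_iff_one _).2 (mem_degreeZeroSpan.2 hu.dvd)

theorem mul_mem_graded_zero {γ : Γ} {a b : A} (ha : a ∈ 𝒜 γ) (hb : b ∈ 𝒜 (-γ)) :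
    a * b ∈ 𝒜 0 :=
  add_neg_cancel γ ▸ SetLike.mul_mem_graded ha hb

section IsDomain

variable [IsDomain A]

instance isDomain_gradeZero : IsDomain (𝒜 0) :=
  Function.Injective.isDomain (algebraMap (𝒜 0) A) Subtype.val_injective

theorem coe_dvd_coe {a b : 𝒜 0} : (b : A) ∣ a ↔ b ∣ a := by
  refine ⟨fun ⟨w, hw⟩ => ?_, fun ⟨w, hw⟩ => ⟨w, congrArg Subtype.val hw⟩⟩
  obtain rfl | hb := eq_or_ne b 0
  · exact ⟨0, Subtype.ext (by simpa using hw)⟩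
  · have hw0 := mem_graded_sub_of_mul_mem b.2 (Subtype.coe_ne_coe.2 hb) (hw ▸ a.2)
    exact ⟨⟨w, sub_zero (0 : Γ) ▸ hw0⟩, Subtype.ext hw⟩

theorem degreeZeroSpan_coe (a : 𝒜 0) : degreeZeroSpan 𝒜 (a : A) = Ideal.span {a} := by
  ext z
  rw [mem_degreeZeroSpan, Ideal.mem_span_singleton, coe_dvd_coe]

end IsDomain

namespace IsDedekindGrading

variable (h𝒜 : IsDedekindGrading 𝒜)

include h𝒜

theorem degreeZeroSpan_le_iff {f g : A} {γ : Γ} (hf : f ∈ 𝒜 γ) :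
    degreeZeroSpan 𝒜 f ≤ degreeZeroSpan 𝒜 g ↔ g ∣ f := by
  refine ⟨fun hle => ?_, degreeZeroSpan_le_of_dvd⟩
  suffices ∀ r ∈ 𝒜 (-γ) * 𝒜 γ, g ∣ f * r from
    mul_one f ▸ this 1 (h𝒜.one_mem_neg_mul γ)
  intro r hr
  induction hr using Submodule.mul_induction_on' with
  | mem_mul_mem q hq h _ =>
    have hmem : (⟨f * q, mul_mem_graded_zero hf hq⟩ : 𝒜 0) ∈ degreeZeroSpan 𝒜 f :=
      mem_degreeZeroSpan.2 (dvd_mul_right f q)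
    exact mul_assoc f q h ▸ (mem_degreeZeroSpan.1 (hle hmem)).mul_right h
  | add r _ s _ hr hs => exact mul_add f r s ▸ dvd_add hr hs

theorem degreeZeroSpan_ne_bot {f : A} {γ : Γ} (hf : f ∈ 𝒜 γ) (hf0 : f ≠ 0) :
    degreeZeroSpan 𝒜 f ≠ ⊥ := fun h =>
  hf0 <| zero_dvd_iff.1 <| (h𝒜.degreeZeroSpan_le_iff hf).1 (h.trans_le bot_le)

theorem degreeZeroSpan_isMaximal {p : A} {γ : Γ} (hp : p ∈ 𝒜 γ) (hprime : Prime p) :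
    (degreeZeroSpan 𝒜 p).IsMaximal := by
  refine Ideal.isMaximal_iff.2 ⟨(Ideal.ne_top_iff_one _).1 (degreeZeroSpan_isPrime hprime).ne_top,
    fun J b hJ hb hbJ => ?_⟩
  obtain ⟨h, hh, hu⟩ :=
    h𝒜.exists_isUnit_mul_add γ p hp hprime b b.2 (mem_degreeZeroSpan.not.1 hb)
  obtain ⟨v, hv⟩ := hu.exists_right_inv
  have hv0 : v ∈ 𝒜 0 := h𝒜.mem_zero_of_isUnit v (.of_mul_eq_one_right _ hv)
  set c : 𝒜 0 := ⟨p * h, mul_mem_graded_zero hp hh⟩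
  have hc : c ∈ J := hJ (mem_degreeZeroSpan.2 (dvd_mul_right p h))
  have hone : (1 : 𝒜 0) = (c + b) * ⟨v, hv0⟩ := Subtype.ext hv.symm
  exact hone ▸ J.mul_mem_right _ (J.add_mem hc hbJ)

variable [IsDomain A]

theorem degreeZeroSpan_mul {f g : A} {γ δ : Γ} (hf : f ∈ 𝒜 γ) (hf0 : f ≠ 0) (hg : g ∈ 𝒜 δ)
    (hg0 : g ≠ 0) :
    degreeZeroSpan 𝒜 (f * g) = degreeZeroSpan 𝒜 f * degreeZeroSpan 𝒜 g := by
  refine le_antisymm (fun z hz => ?_) (degreeZeroSpan_mul_le f g)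
  obtain ⟨w, hw⟩ := mem_degreeZeroSpan.1 hz
  have hwmem : w ∈ 𝒜 (0 - (γ + δ)) := mem_graded_sub_of_mul_mem
    (SetLike.mul_mem_graded hf hg) (mul_ne_zero hf0 hg0) (hw ▸ z.2)
  suffices ∀ r ∈ 𝒜 (-γ) * 𝒜 γ,
      ∃ y ∈ degreeZeroSpan 𝒜 f * degreeZeroSpan 𝒜 g, (y : A) = z * r by
    obtain ⟨y, hy, hyz⟩ := this 1 (h𝒜.one_mem_neg_mul γ)
    rwa [← Subtype.ext (hyz.trans (mul_one _))]
  intro r hr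
  induction hr using Submodule.mul_induction_on' with
  | mem_mul_mem q hq h hh =>
    have hhw : h * w ∈ 𝒜 (-δ) := by
      have := SetLike.mul_mem_graded hh hwmem
      rwa [show γ + (0 - (γ + δ)) = -δ by abel] at this
    refine ⟨⟨f * q, mul_mem_graded_zero hf hq⟩ * ⟨g * (h * w), mul_mem_graded_zero hg hhw⟩,
      Ideal.mul_mem_mul (mem_degreeZeroSpan.2 (dvd_mul_right _ _))
        (mem_degreeZeroSpan.2 (dvd_mul_right _ _)), ?_⟩
    rw [SetLike.GradeZero.coe_mul, hw]
    ring
  | add r _ s _ hr hs =>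
    obtain ⟨x, hx, hxr⟩ := hr
    obtain ⟨y, hy, hys⟩ := hs
    exact ⟨x + y, add_mem hx hy, by rw [Submodule.coe_add, hxr, hys, mul_add]⟩

theorem degreeZeroSpan_fg {f : A} {γ : Γ} (hf : f ∈ 𝒜 γ) (hf0 : f ≠ 0) :
    (degreeZeroSpan 𝒜 f).FG := by
  obtain ⟨g, hg, hg0⟩ := h𝒜.exists_mem_ne_zero (-γ)
  set a : 𝒜 0 := ⟨f * g, mul_mem_graded_zero hf hg⟩
  have ha : a ≠ 0 := fun h => mul_ne_zero hf0 hg0 (congrArg Subtype.val h)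
  refine Ideal.fg_of_isUnit (IsFractionRing.injective (𝒜 0) (FractionRing (𝒜 0))) _
    (isUnit_of_mul_isUnit_left (y := (degreeZeroSpan 𝒜 g : FractionalIdeal (𝒜 0)⁰ _)) ?_)
  rw [← FractionalIdeal.coeIdeal_mul, ← h𝒜.degreeZeroSpan_mul hf hf0 hg hg0,
    show degreeZeroSpan 𝒜 (f * g) = Ideal.span {a} from degreeZeroSpan_coe a,
    FractionalIdeal.coeIdeal_span_singleton]
  exact isUnit_iff_exists_inv.2 ⟨_, FractionalIdeal.spanSingleton_mul_inv _
    (IsFractionRing.to_map_ne_zero_of_mem_nonZeroDivisors (mem_nonZeroDivisors_of_ne_zero ha))⟩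

variable [UniqueFactorizationMonoid A] [TwoUniqueSums Γ]

theorem exists_prime_degreeZeroSpan_le {a : A} {γ : Γ} (ha : a ∈ 𝒜 γ) (ha0 : a ≠ 0)
    {Q : Ideal (𝒜 0)} [hQ : Q.IsPrime] (haQ : degreeZeroSpan 𝒜 a ≤ Q) :
    ∃ δ, ∃ p ∈ 𝒜 δ, Prime p ∧ degreeZeroSpan 𝒜 p ≤ Q := by
  induction a using UniqueFactorizationMonoid.induction_on_prime generalizing γ with
  | h₁ => exact absurd rfl ha0
  | h₂ u hu =>
    rw [degreeZeroSpan_eq_top_of_isUnit hu, top_le_iff] at haQ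
    exact absurd haQ hQ.ne_top
  | h₃ a p ha' hp ih =>
    obtain ⟨δ, hδ⟩ := exists_mem_graded_of_mul_mem ha ha0
    have haδ := mem_graded_sub_of_mul_mem hδ hp.ne_zero ha
    rw [h𝒜.degreeZeroSpan_mul hδ hp.ne_zero haδ ha', hQ.mul_le] at haQ
    exact haQ.elim (fun h => ⟨δ, p, hδ, hp, h⟩) (ih haδ ha')

theorem exists_prime_eq_degreeZeroSpan {Q : Ideal (𝒜 0)} (hQ : Q.IsPrime) (hQ0 : Q ≠ ⊥) :
    ∃ γ, ∃ p ∈ 𝒜 γ, Prime p ∧ Q = degreeZeroSpan 𝒜 p := by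
  obtain ⟨a, haQ, ha0⟩ := Submodule.exists_mem_ne_zero_of_ne_bot hQ0
  obtain ⟨γ, p, hp, hprime, hle⟩ := h𝒜.exists_prime_degreeZeroSpan_le a.2
    (ZeroMemClass.coe_eq_zero.not.2 ha0)
    ((degreeZeroSpan_coe (𝒜 := 𝒜) a).trans_le ((Ideal.span_singleton_le_iff_mem Q).2 haQ))
  exact ⟨γ, p, hp, hprime, ((h𝒜.degreeZeroSpan_isMaximal hp hprime).eq_of_le hQ.ne_top hle).symm⟩

theorem isDedekindDomain : IsDedekindDomain (𝒜 0) := by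
  have : IsNoetherianRing (𝒜 0) := .of_prime_ne_bot fun Q hQ hQ0 => by
    obtain ⟨γ, p, hp, hprime, rfl⟩ := h𝒜.exists_prime_eq_degreeZeroSpan hQ hQ0
    exact h𝒜.degreeZeroSpan_fg hp hprime.ne_zero
  have : Ring.DimensionLEOne (𝒜 0) := ⟨fun {Q} hQ0 hQ => by
    obtain ⟨γ, p, hp, hprime, rfl⟩ := h𝒜.exists_prime_eq_degreeZeroSpan hQ hQ0
    exact h𝒜.degreeZeroSpan_isMaximal hp hprime⟩
  have : IsIntegrallyClosed (𝒜 0) :=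
    isIntegrallyClosed_of_dvd_of_algebraMap_dvd (𝒜 0) A fun _ _ => coe_dvd_coe.1
  exact { __ := ‹IsNoetherianRing (𝒜 0)› }

omit [UniqueFactorizationMonoid A] [TwoUniqueSums Γ]

variable [IsDedekindDomain (𝒜 0)]

theorem mk0_eq_mk0_iff {f g : A} {γ δ : Γ} (hf : f ∈ 𝒜 γ) (hf0 : f ≠ 0) (hg : g ∈ 𝒜 δ)
    (hg0 : g ≠ 0) {F G : (Ideal (𝒜 0))⁰} (hF : (F : Ideal (𝒜 0)) = degreeZeroSpan 𝒜 f)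
    (hG : (G : Ideal (𝒜 0)) = degreeZeroSpan 𝒜 g) : mk0 F = mk0 G ↔ γ = δ := by
  have span_mul : ∀ (a : 𝒜 0) {k ε} (_ : k ∈ 𝒜 ε) (_ : k ≠ 0), a ≠ 0 →
      Ideal.span {a} * degreeZeroSpan 𝒜 k = degreeZeroSpan 𝒜 (a * k) := fun a _ _ hk hk0 ha => by
    rw [← degreeZeroSpan_coe, h𝒜.degreeZeroSpan_mul a.2 (ZeroMemClass.coe_eq_zero.not.2 ha) hk hk0]
  rw [ClassGroup.mk0_eq_mk0_iff, hF, hG]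
  constructor
  · rintro ⟨a, b, ha, hb, hab⟩
    rw [span_mul a hf hf0 ha, span_mul b hg hg0 hb] at hab
    have haf : ↑a * f ∈ 𝒜 γ := zero_add γ ▸ SetLike.mul_mem_graded a.2 hf
    have hbg : ↑b * g ∈ 𝒜 δ := zero_add δ ▸ SetLike.mul_mem_graded b.2 hg
    obtain ⟨u, hu⟩ := associated_of_dvd_dvd
      ((h𝒜.degreeZeroSpan_le_iff hbg).1 hab.ge) ((h𝒜.degreeZeroSpan_le_iff haf).1 hab.le)
    have hbg' : ↑b * g ∈ 𝒜 γ :=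
      add_zero γ ▸ hu ▸ SetLike.mul_mem_graded haf (h𝒜.mem_zero_of_isUnit u u.isUnit)
    exact DirectSum.degree_eq_of_mem_mem 𝒜 hbg' hbg
      (mul_ne_zero (ZeroMemClass.coe_eq_zero.not.2 hb) hg0)
  · rintro rfl
    obtain ⟨h, hh, hh0⟩ := h𝒜.exists_mem_ne_zero (-γ)
    set a : 𝒜 0 := ⟨g * h, mul_mem_graded_zero hg hh⟩
    set b : 𝒜 0 := ⟨f * h, mul_mem_graded_zero hf hh⟩
    have ha : a ≠ 0 := fun h => mul_ne_zero hg0 hh0 (congrArg Subtype.val h)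
    have hb : b ≠ 0 := fun h => mul_ne_zero hf0 hh0 (congrArg Subtype.val h)
    refine ⟨a, b, ha, hb, ?_⟩
    rw [span_mul a hf hf0 ha, span_mul b hg hg0 hb, mul_right_comm, mul_comm g f,
      mul_right_comm]

variable [UniqueFactorizationMonoid A] [TwoUniqueSums Γ]

theorem exists_classGroup_mulEquiv : ∃ e : Multiplicative Γ ≃* ClassGroup (𝒜 0),
    ∀ γ, ∀ f ∈ 𝒜 γ, f ≠ 0 → ∀ F : (Ideal (𝒜 0))⁰, (F : Ideal (𝒜 0)) = degreeZeroSpan 𝒜 f →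
      mk0 F = e (.ofAdd γ) := by
  choose x hx hx0 using h𝒜.exists_mem_ne_zero
  let J (γ : Γ) : (Ideal (𝒜 0))⁰ := ⟨degreeZeroSpan 𝒜 (x γ),
    mem_nonZeroDivisors_of_ne_zero (h𝒜.degreeZeroSpan_ne_bot (hx γ) (hx0 γ))⟩
  have mk0_eq {γ f} (hf : f ∈ 𝒜 γ) (hf0 : f ≠ 0) {F : (Ideal (𝒜 0))⁰}
      (hF : (F : Ideal (𝒜 0)) = degreeZeroSpan 𝒜 f) : mk0 F = mk0 (J γ) :=
    (h𝒜.mk0_eq_mk0_iff hf hf0 (hx γ) (hx0 γ) hF rfl).2 rfl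
  let φ : Multiplicative Γ →* ClassGroup (𝒜 0) := MonoidHom.mk' (fun γ => mk0 (J γ.toAdd))
    fun γ δ => by
      rw [← map_mul]
      exact (mk0_eq (SetLike.mul_mem_graded (hx γ.toAdd) (hx δ.toAdd))
        (mul_ne_zero (hx0 _) (hx0 _))
        (h𝒜.degreeZeroSpan_mul (hx _) (hx0 _) (hx _) (hx0 _)).symm).symm
  have hinj : Function.Injective φ := fun γ δ h =>
    (h𝒜.mk0_eq_mk0_iff (hx γ.toAdd) (hx0 _) (hx δ.toAdd) (hx0 _) rfl rfl).1 h
  have hsurj : Function.Surjective φ := fun c => by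
    obtain ⟨I, rfl⟩ := mk0_surjective c
    obtain ⟨s, hs⟩ := Submodule.exists_mem_ne_zero_of_ne_bot (nonZeroDivisors.ne_zero I.2)
    refine (Subgroup.closure_le φ.range).2 ?_ (mk0_mem_closure_primes hs.1)
    rintro _ ⟨P, ⟨hP, -⟩, rfl⟩
    obtain ⟨γ, p, hp, hprime, hPp⟩ :=
      h𝒜.exists_prime_eq_degreeZeroSpan hP (nonZeroDivisors.ne_zero P.2)
    exact ⟨.ofAdd γ, (mk0_eq hp hprime.ne_zero hPp).symm⟩
  exact ⟨.ofBijective φ ⟨hinj, hsurj⟩, fun γ f hf hf0 F hF => mk0_eq hf hf0 hF⟩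

omit [UniqueFactorizationMonoid A] [TwoUniqueSums Γ] in
theorem infinite_primesInClass {ι : Type*} [Infinite ι] {γ : Γ} {f : ι → A}
    (hf : ∀ i, f i ∈ 𝒜 γ) (hprime : ∀ i, Prime (f i)) (hdvd : ∀ i j, f i ∣ f j → i = j)
    {c : ClassGroup (𝒜 0)}
    (hc : ∀ i, ∀ F : (Ideal (𝒜 0))⁰, (F : Ideal (𝒜 0)) = degreeZeroSpan 𝒜 (f i) → mk0 F = c) :
    (primesInClass (𝒜 0) c).Infinite := by
  let P (i : ι) : (Ideal (𝒜 0))⁰ := ⟨degreeZeroSpan 𝒜 (f i),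
    mem_nonZeroDivisors_of_ne_zero (h𝒜.degreeZeroSpan_ne_bot (hf i) (hprime i).ne_zero)⟩
  have hP : Function.Injective P := fun i j hij =>
    hdvd i j ((h𝒜.degreeZeroSpan_le_iff (hf j)).1 (congrArg Subtype.val hij).ge)
  refine (Set.infinite_range_of_injective hP).mono ?_
  rintro _ ⟨i, rfl⟩
  exact ⟨degreeZeroSpan_isPrime (hprime i), hc i _ rfl⟩

end IsDedekindGrading

end DegreeZeroPart

section LocalizationGrading

open DirectSum

variable {Γ R A : Type*} [AddCommGroup Γ] [CommRing R] [CommRing A] [Algebra R A] {S : Submonoid A}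

section GradedMonoid

variable (𝒜 : Γ → Submodule R A) [SetLike.GradedMonoid 𝒜] (hS : ∀ s ∈ S, s ∈ 𝒜 0)

/-- The degree `γ` part of the localization of a graded algebra at a multiplicative set of
elements of degree zero. -/
def localizationGrading (γ : Γ) : Submodule R (Localization S) where
  carrier := {a | ∃ r ∈ 𝒜 γ, ∃ s ∈ S, a * algebraMap A _ s = algebraMap A _ r}
  zero_mem' := ⟨0, zero_mem _, 1, one_mem _, by rw [zero_mul, map_zero]⟩
  add_mem' := by
    rintro a b ⟨r, hr, s, hs, hrs⟩ ⟨q, hq, t, ht, hqt⟩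
    refine ⟨r * t + q * s, add_mem ?_ ?_, s * t, mul_mem hs ht, ?_⟩
    · exact add_zero γ ▸ SetLike.mul_mem_graded hr (hS t ht)
    · exact add_zero γ ▸ SetLike.mul_mem_graded hq (hS s hs)
    · rw [map_add, map_mul, map_mul, map_mul, ← hrs, ← hqt]
      ring
  smul_mem' := by
    rintro c a ⟨r, hr, s, hs, hrs⟩
    exact ⟨c • r, Submodule.smul_mem _ c hr, s, hs, by
      rw [smul_mul_assoc, hrs, Algebra.algebraMap_eq_smul_one, Algebra.algebraMap_eq_smul_one,
        smul_assoc]⟩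

theorem algebraMap_mem_localizationGrading {γ : Γ} {r : A} (hr : r ∈ 𝒜 γ) :
    algebraMap A _ r ∈ localizationGrading 𝒜 hS γ :=
  ⟨r, hr, 1, one_mem S, by rw [map_one, mul_one]⟩

instance localizationGrading.gradedMonoid : SetLike.GradedMonoid (localizationGrading 𝒜 hS) where
  one_mem := map_one (algebraMap A (Localization S)) ▸
    algebraMap_mem_localizationGrading 𝒜 hS SetLike.GradedOne.one_mem
  mul_mem := by
    rintro γ δ a b ⟨r, hr, s, hs, hrs⟩ ⟨q, hq, t, ht, hqt⟩
    refine ⟨r * q, SetLike.mul_mem_graded hr hq, s * t, mul_mem hs ht, ?_⟩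
    rw [map_mul, map_mul, ← hrs, ← hqt, mul_mul_mul_comm]

theorem algebraMap_mem_localizationGrading_mul {γ δ : Γ} {q : A} (hq : q ∈ 𝒜 γ * 𝒜 δ) :
    algebraMap A _ q ∈ localizationGrading 𝒜 hS γ * localizationGrading 𝒜 hS δ := by
  induction hq using Submodule.mul_induction_on' with
  | mem_mul_mem a ha b hb =>
    rw [map_mul]
    exact Submodule.mul_mem_mul (algebraMap_mem_localizationGrading 𝒜 hS ha)
      (algebraMap_mem_localizationGrading 𝒜 hS hb)
  | add a _ b _ ha hb => exact map_add (algebraMap A (Localization S)) a b ▸ add_mem ha hb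

theorem inv_mem_localizationGrading {s : A} (hs : s ∈ S) {v : Localization S}
    (hv : algebraMap A _ s * v = 1) : v ∈ localizationGrading 𝒜 hS 0 :=
  ⟨1, SetLike.GradedOne.one_mem, s, hs, by rw [mul_comm, hv, map_one]⟩

theorem one_mem_localizationGrading_mul {γ δ : Γ} {q : A} (hq : q ∈ 𝒜 γ * 𝒜 δ) (hqS : q ∈ S) :
    1 ∈ localizationGrading 𝒜 hS γ * localizationGrading 𝒜 hS δ := by
  obtain ⟨v, hv⟩ := (IsLocalization.map_units (Localization S) ⟨q, hqS⟩).exists_right_inv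
  have hmul := Submodule.mul_mem_mul (algebraMap_mem_localizationGrading_mul 𝒜 hS hq)
    (inv_mem_localizationGrading 𝒜 hS hqS hv)
  rw [mul_assoc, hv] at hmul
  have mul_zero_le : localizationGrading 𝒜 hS δ * localizationGrading 𝒜 hS 0 ≤
      localizationGrading 𝒜 hS δ :=
    Submodule.mul_le.2 fun a ha b hb => add_zero δ ▸ SetLike.mul_mem_graded ha hb
  exact mul_le_mul_right mul_zero_le _ hmul

end GradedMonoid

section GradedAlgebra

variable [DecidableEq Γ] (𝒜 : Γ → Submodule R A) [GradedAlgebra 𝒜] (hS : ∀ s ∈ S, s ∈ 𝒜 0)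

theorem exists_common_denominator (z : ⨁ γ, localizationGrading 𝒜 hS γ) :
    ∃ s ∈ S, ∃ r : A, DirectSum.coeAddMonoidHom (localizationGrading 𝒜 hS) z * algebraMap A _ s =
      algebraMap A _ r ∧ ∀ γ, (z γ : Localization S) * algebraMap A _ s =
        algebraMap A _ (decompose 𝒜 r γ : A) := by
  induction z using DirectSum.induction_on with
  | zero => exact ⟨1, one_mem S, 0, by simp, by simp⟩
  | of δ a =>
    obtain ⟨r, hr, s, hs, hrs⟩ := a.2
    refine ⟨s, hs, r, (DirectSum.coeAddMonoidHom_of _ δ a).symm ▸ hrs, fun γ => ?_⟩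
    obtain rfl | hne := eq_or_ne δ γ
    · rw [of_eq_same, hrs, decompose_of_mem_same 𝒜 hr]
    · rw [of_eq_of_ne _ _ _ hne.symm, decompose_of_mem_ne 𝒜 hr hne, ZeroMemClass.coe_zero, zero_mul,
        map_zero]
  | add x y hx hy =>
    obtain ⟨s, hs, r, hrs, hr⟩ := hx
    obtain ⟨t, ht, q, hqt, hq⟩ := hy
    refine ⟨s * t, mul_mem hs ht, r * t + q * s, ?_, fun γ => ?_⟩
    · rw [map_add, map_add, map_mul, map_mul, map_mul, ← hrs, ← hqt]
      ring
    · rw [decompose_add, DirectSum.add_apply, DirectSum.add_apply, Submodule.coe_add,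
        Submodule.coe_add, coe_decompose_mul_of_right_mem_zero 𝒜 (hS t ht),
        coe_decompose_mul_of_right_mem_zero 𝒜 (hS s hs), map_add, map_mul, map_mul, map_mul,
        ← hr, ← hq]
      ring

theorem localizationGrading_isInternal : IsInternal (localizationGrading 𝒜 hS) := by
  constructor
  · rw [injective_iff_map_eq_zero]
    intro z hz
    obtain ⟨s, hs, r, hrs, hr⟩ := exists_common_denominator 𝒜 hS z
    rw [hz, zero_mul, eq_comm, IsLocalization.map_eq_zero_iff S] at hrs
    obtain ⟨c, hc⟩ := hrs
    ext γ
    rw [DirectSum.zero_apply, ZeroMemClass.coe_zero,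
      ← (IsLocalization.map_units (Localization S) ⟨s, hs⟩).mul_left_eq_zero, hr γ,
      IsLocalization.map_eq_zero_iff S]
    exact ⟨c, by rw [← coe_decompose_mul_of_left_mem_zero 𝒜 (hS c c.2), hc, decompose_zero,
      DirectSum.zero_apply, ZeroMemClass.coe_zero]⟩
  · intro a
    classical
    obtain ⟨⟨r, s⟩, hrs⟩ := IsLocalization.surj S a
    obtain ⟨v, hv⟩ := (IsLocalization.map_units (Localization S) s).exists_right_inv
    have ha : a = algebraMap A _ r * v := by rw [← hrs, mul_assoc, hv, mul_one]
    rw [← AddMonoidHom.mem_mrange, ha, ← sum_support_decompose 𝒜 r, map_sum, Finset.sum_mul]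
    refine sum_mem fun γ _ => ?_
    have hmem := SetLike.mul_mem_graded
      (algebraMap_mem_localizationGrading 𝒜 hS (decompose 𝒜 r γ).2)
      (inv_mem_localizationGrading 𝒜 hS s.2 hv)
    rw [add_zero] at hmem
    exact ⟨of (fun γ => localizationGrading 𝒜 hS γ) γ ⟨_, hmem⟩, DirectSum.coeAddMonoidHom_of _ _ _⟩

noncomputable instance localizationGrading.gradedAlgebra :
    GradedAlgebra (localizationGrading 𝒜 hS) :=
  (localizationGrading_isInternal 𝒜 hS).gradedAlgebra

end GradedAlgebra

end LocalizationGrading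

section DegreeZeroDivisorSet

variable {Γ R A : Type*} [AddCommGroup Γ] [CommRing R] [CommRing A] [IsDomain A] [Algebra R A]
  (𝒜 : Γ → Submodule R A)

/-- The multiplicative set of nonzero elements of a graded algebra all of whose divisors are
homogeneous of degree zero. -/
def degreeZeroDivisorSet [SetLike.GradedMonoid 𝒜] [DecompositionMonoid A]
    (hunit : ∀ u, IsUnit u → u ∈ 𝒜 0) : Submonoid A where
  carrier := {s | s ≠ 0 ∧ ∀ t, t ∣ s → t ∈ 𝒜 0}
  one_mem' := ⟨one_ne_zero, fun t ht => hunit t (isUnit_of_dvd_one ht)⟩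
  mul_mem' := fun ha hb => ⟨mul_ne_zero ha.1 hb.1, fun t ht => by
    obtain ⟨x, y, hx, hy, rfl⟩ := exists_dvd_and_dvd_of_dvd_mul ht
    exact add_zero (0 : Γ) ▸ SetLike.mul_mem_graded (ha.2 x hx) (hb.2 y hy)⟩

section GradedMonoid

variable {𝒜} [SetLike.GradedMonoid 𝒜] [DecompositionMonoid A] (hunit : ∀ u, IsUnit u → u ∈ 𝒜 0)

theorem mem_zero_of_mem_degreeZeroDivisorSet :
    ∀ s ∈ degreeZeroDivisorSet 𝒜 hunit, s ∈ 𝒜 0 :=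
  fun s hs => hs.2 s dvd_rfl

theorem degreeZeroDivisorSet_le_nonZeroDivisors : degreeZeroDivisorSet 𝒜 hunit ≤ A⁰ :=
  fun _ hs => mem_nonZeroDivisors_of_ne_zero hs.1

variable {hunit}

theorem mem_degreeZeroDivisorSet_of_dvd {s t : A} (hs : s ∈ degreeZeroDivisorSet 𝒜 hunit)
    (hts : t ∣ s) : t ∈ degreeZeroDivisorSet 𝒜 hunit :=
  ⟨ne_zero_of_dvd_ne_zero hs.1 hts, fun t' ht' => hs.2 t' (ht'.trans hts)⟩

theorem mem_degreeZeroDivisorSet_of_isUnit {x : A}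
    (h : IsUnit (algebraMap A (Localization (degreeZeroDivisorSet 𝒜 hunit)) x)) :
    x ∈ degreeZeroDivisorSet 𝒜 hunit := by
  obtain ⟨s, hs, hxs⟩ := (IsLocalization.algebraMap_isUnit_iff (degreeZeroDivisorSet 𝒜 hunit)).1 h
  exact mem_degreeZeroDivisorSet_of_dvd hs hxs

variable (hunit) in
theorem prime_mem_degreeZeroDivisorSet {p : A} (hp : Prime p) (hp0 : p ∈ 𝒜 0) :
    p ∈ degreeZeroDivisorSet 𝒜 hunit := by
  refine ⟨hp.ne_zero, fun t ht => ?_⟩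
  obtain h | ⟨u, rfl⟩ := hp.irreducible.dvd_iff.1 ht
  · exact hunit t h
  · exact add_zero (0 : Γ) ▸ SetLike.mul_mem_graded hp0 (hunit u u.isUnit)

variable (hunit) in
/-- The grading of the localization at `degreeZeroDivisorSet`. -/
abbrev degreeZeroLocalizationGrading (γ : Γ) :
    Submodule R (Localization (degreeZeroDivisorSet 𝒜 hunit)) :=
  localizationGrading 𝒜 (mem_zero_of_mem_degreeZeroDivisorSet hunit) γ

theorem mem_degreeZeroLocalizationGrading_zero_of_isUnit
    {u : Localization (degreeZeroDivisorSet 𝒜 hunit)} (hu : IsUnit u) :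
    u ∈ degreeZeroLocalizationGrading hunit 0 := by
  obtain ⟨⟨r, s⟩, hrs⟩ := IsLocalization.surj (degreeZeroDivisorSet 𝒜 hunit) u
  have hr : r ∈ degreeZeroDivisorSet 𝒜 hunit :=
    mem_degreeZeroDivisorSet_of_isUnit (hrs ▸ hu.mul (IsLocalization.map_units _ s))
  exact ⟨r, mem_zero_of_mem_degreeZeroDivisorSet hunit r hr, s, s.2, hrs⟩

theorem prime_algebraMap_degreeZeroDivisorSet {p : A} (hp : Prime p)
    (hpS : p ∉ degreeZeroDivisorSet 𝒜 hunit) :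
    Prime (algebraMap A (Localization (degreeZeroDivisorSet 𝒜 hunit)) p) := by
  let f := IsLocalization.toLocalizationMap (degreeZeroDivisorSet 𝒜 hunit)
    (Localization (degreeZeroDivisorSet 𝒜 hunit))
  have hinj := IsLocalization.injective (Localization (degreeZeroDivisorSet 𝒜 hunit))
    (degreeZeroDivisorSet_le_nonZeroDivisors hunit)
  exact f.map_prime hp ((map_ne_zero_iff (algebraMap A _) hinj).2 hp.ne_zero)
    fun h => hpS (mem_degreeZeroDivisorSet_of_isUnit h)

theorem dvd_of_algebraMap_degreeZeroDivisorSet_dvd {p r : A} (hp : Prime p)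
    (hpS : p ∉ degreeZeroDivisorSet 𝒜 hunit)
    (h : algebraMap A (Localization (degreeZeroDivisorSet 𝒜 hunit)) p ∣ algebraMap A _ r) :
    p ∣ r := by
  obtain ⟨s, hs, hdvd⟩ :=
    (IsLocalization.toLocalizationMap (degreeZeroDivisorSet 𝒜 hunit) _).map_dvd_map.1 h
  exact (hp.dvd_or_dvd hdvd).resolve_left fun hps => hpS (mem_degreeZeroDivisorSet_of_dvd hs hps)

end GradedMonoid

section GradedAlgebra

variable {𝒜} [DecidableEq Γ] [GradedAlgebra 𝒜] [UniqueFactorizationMonoid A]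
  {hunit : ∀ u, IsUnit u → u ∈ 𝒜 0}

theorem exists_mul_add_mem_degreeZeroDivisorSet {γ : Γ} {r r' : A} (hr : r ∈ 𝒜 γ) (hr' : r' ∈ 𝒜 0)
    (hprime : Prime (algebraMap A (Localization (degreeZeroDivisorSet 𝒜 hunit)) r))
    (hdvd : ¬ algebraMap A (Localization (degreeZeroDivisorSet 𝒜 hunit)) r ∣ algebraMap A _ r')
    (hadd : ∀ x ∈ 𝒜 γ, x ≠ 0 → ∀ y ∈ 𝒜 0, IsRelPrime x y → ∃ h ∈ 𝒜 (-γ), Prime (x * h + y)) :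
    ∃ h ∈ 𝒜 (-γ), r * h + r' ∈ degreeZeroDivisorSet 𝒜 hunit := by
  have hr0 : r ≠ 0 := by
    rintro rfl
    exact hprime.ne_zero (map_zero _)
  obtain ⟨x, y, c, hxy, rfl, rfl⟩ := UniqueFactorizationMonoid.exists_reduced_factors r hr0 r'
  rw [map_mul] at hprime hdvd
  have hc : c ∈ degreeZeroDivisorSet 𝒜 hunit := by
    refine mem_degreeZeroDivisorSet_of_isUnit
      ((hprime.irreducible.isUnit_or_isUnit rfl).resolve_right fun hx => hdvd ?_)
    rw [hx.mul_right_dvd, map_mul]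
    exact dvd_mul_right _ _
  have hc0 := mem_zero_of_mem_degreeZeroDivisorSet hunit c hc
  have hx : x ∈ 𝒜 γ := sub_zero γ ▸ mem_graded_sub_of_mul_mem hc0 hc.1 hr
  have hy : y ∈ 𝒜 0 := sub_zero (0 : Γ) ▸ mem_graded_sub_of_mul_mem hc0 hc.1 hr'
  obtain ⟨h, hh, hp⟩ := hadd x hx (right_ne_zero_of_mul hr0) y hy hxy
  refine ⟨h, hh, ?_⟩
  rw [mul_assoc, ← mul_add]
  refine mul_mem hc (prime_mem_degreeZeroDivisorSet hunit hp ?_)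
  exact add_mem (add_neg_cancel γ ▸ SetLike.mul_mem_graded hx hh) hy

theorem isDedekindGrading_degreeZeroLocalizationGrading
    (hmul : ∀ γ, ∃ q ∈ 𝒜 γ * 𝒜 (-γ), Prime q)
    (hadd : ∀ γ, ∀ x ∈ 𝒜 γ, x ≠ 0 → ∀ y ∈ 𝒜 0, IsRelPrime x y →
      ∃ h ∈ 𝒜 (-γ), Prime (x * h + y)) :
    IsDedekindGrading (degreeZeroLocalizationGrading hunit) where
  one_mem_mul γ := by
    obtain ⟨q, hq, hprime⟩ := hmul γ
    have hq0 : q ∈ 𝒜 0 := Submodule.mul_le.2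
      (fun a ha b hb => add_neg_cancel γ ▸ SetLike.mul_mem_graded ha hb) hq
    exact one_mem_localizationGrading_mul 𝒜 _ hq (prime_mem_degreeZeroDivisorSet hunit hprime hq0)
  mem_zero_of_isUnit _ := mem_degreeZeroLocalizationGrading_zero_of_isUnit
  exists_isUnit_mul_add := by
    rintro γ p ⟨r, hr, s, hs, hps⟩ hp b ⟨r', hr', s', hs', hbs⟩ hpb
    let ι := algebraMap A (Localization (degreeZeroDivisorSet 𝒜 hunit))
    have isUnit_of_mem {t : A} (ht : t ∈ degreeZeroDivisorSet 𝒜 hunit) : IsUnit (ι t) :=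
      IsLocalization.map_units _ (⟨t, ht⟩ : degreeZeroDivisorSet 𝒜 hunit)
    have hpr : Associated p (ι r) := hps ▸ associated_mul_unit_right _ _ (isUnit_of_mem hs)
    have hbr : Associated b (ι r') := hbs ▸ associated_mul_unit_right _ _ (isUnit_of_mem hs')
    obtain ⟨h, hh, hmem⟩ := exists_mul_add_mem_degreeZeroDivisorSet hr hr' (hpr.prime hp)
      ((hpr.dvd_iff_dvd_left.trans hbr.dvd_iff_dvd_right).not.1 hpb) (hadd γ)
    obtain ⟨v, hv⟩ := (isUnit_of_mem hs').exists_right_inv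
    have hsh : s * h ∈ 𝒜 (-γ) := zero_add (-γ) ▸ SetLike.mul_mem_graded
      (mem_zero_of_mem_degreeZeroDivisorSet hunit s hs) hh
    refine ⟨ι (s * h) * v, ⟨s * h, hsh, s', hs', ?_⟩, ?_⟩
    · rw [mul_assoc, mul_comm v, hv, mul_one]
    · have hfrac : p * (ι (s * h) * v) + b = ι (r * h + r') * v := by
        rw [map_mul, map_add, map_mul, ← hps, ← hbs]
        linear_combination -b * hv
      rw [hfrac]
      exact (isUnit_of_mem hmem).mul (.of_mul_eq_one_right _ hv)

end GradedAlgebra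

end DegreeZeroDivisorSet

section PolynomialGrading

open MvPolynomial

attribute [local instance] WeightedHomogeneousSubmodule.gradedMonoid weightedGradedAlgebra

theorem exists_prime_mul_X_add {Γ R : Type*} [CommRing R] [IsDomain R] [UniqueFactorizationMonoid R]
    (γ : Γ) {x y : MvPolynomial (Γ × ℕ) R} (hx0 : x ≠ 0) (hxy : IsRelPrime x y) :
    ∃ n, Prime (x * X (γ, n) + y) := by
  classical
  obtain ⟨n, hn⟩ := Infinite.exists_notMem_finset ((x.vars ∪ y.vars).image Prod.snd)
  have hvars : (γ, n) ∉ x.vars ∪ y.vars := fun h => hn (Finset.mem_image_of_mem Prod.snd h)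
  rw [Finset.mem_union, not_or] at hvars
  exact ⟨n, (irreducible_mul_X_add x y _ hx0 hvars.1 hvars.2 hxy).prime⟩

variable {Γ : Type*} [AddCommGroup Γ] (R : Type*) [CommRing R]

/-- The grading of the polynomial ring in the variables `X (γ, n)`, with `γ : Γ` and `n : ℕ`, in
which `X (γ, n)` has degree `γ`. -/
abbrev indexGrading (γ : Γ) : Submodule R (MvPolynomial (Γ × ℕ) R) :=
  weightedHomogeneousSubmodule R Prod.fst γ

variable {R}

theorem X_mem_indexGrading (γ : Γ) (n : ℕ) : X (γ, n) ∈ indexGrading R γ :=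
  isWeightedHomogeneous_X R Prod.fst (γ, n)

variable [IsDomain R]

theorem isUnit_mem_indexGrading_zero (u : MvPolynomial (Γ × ℕ) R) (hu : IsUnit u) :
    u ∈ indexGrading R 0 := by
  obtain ⟨r, -, rfl⟩ := isUnit_iff_eq_C_of_isReduced.1 hu
  exact isWeightedHomogeneous_C _ r

variable [UniqueFactorizationMonoid R]

theorem exists_prime_mem_indexGrading_mul (γ : Γ) :
    ∃ q ∈ indexGrading R γ * indexGrading R (-γ), Prime q := by
  have hrel : IsRelPrime (X (γ, 0) : MvPolynomial (Γ × ℕ) R) (X (γ, 1) * X (-γ, 1)) := by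
    rw [X_prime.irreducible.isRelPrime_iff_not_dvd]
    intro h
    obtain h | h := X_prime.dvd_or_dvd h <;> simp [X_dvd_X] at h
  obtain ⟨n, hn⟩ := exists_prime_mul_X_add (-γ) (X_ne_zero _) hrel
  exact ⟨_, add_mem
    (Submodule.mul_mem_mul (X_mem_indexGrading γ 0) (X_mem_indexGrading (-γ) n))
    (Submodule.mul_mem_mul (X_mem_indexGrading γ 1) (X_mem_indexGrading (-γ) 1)), hn⟩

theorem X_notMem_degreeZeroDivisorSet {γ : Γ} (hγ : γ ≠ 0) (n : ℕ) :
    X (γ, n) ∉ degreeZeroDivisorSet (indexGrading (Γ := Γ) R) isUnit_mem_indexGrading_zero :=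
  fun h => hγ (IsWeightedHomogeneous.inj_right (X_ne_zero _) (X_mem_indexGrading γ n)
    (mem_zero_of_mem_degreeZeroDivisorSet _ _ h))

theorem exists_isDedekindDomain_classGroup_mulEquiv_of_twoUniqueSums (Γ : Type u) [AddCommGroup Γ]
    [TwoUniqueSums Γ] :
    ∃ (D : Type u) (_ : CommRing D) (_ : IsDedekindDomain D) (e : Multiplicative Γ ≃* ClassGroup D),
      ∀ γ ≠ 0, (primesInClass D (e (.ofAdd γ))).Infinite := by
  classical
  let 𝒜 : Γ → Submodule ℚ (MvPolynomial (Γ × ℕ) ℚ) := indexGrading ℚ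
  let S := degreeZeroDivisorSet 𝒜 isUnit_mem_indexGrading_zero
  let 𝒟 := degreeZeroLocalizationGrading (𝒜 := 𝒜) isUnit_mem_indexGrading_zero
  have : IsDomain (Localization S) :=
    IsLocalization.isDomain_localization (degreeZeroDivisorSet_le_nonZeroDivisors _)
  have h𝒟 : IsDedekindGrading 𝒟 := isDedekindGrading_degreeZeroLocalizationGrading
    exists_prime_mem_indexGrading_mul fun γ x _ hx0 y _ hxy =>
      (exists_prime_mul_X_add (-γ) hx0 hxy).elim fun n hn => ⟨_, X_mem_indexGrading (-γ) n, hn⟩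
  have := h𝒟.isDedekindDomain
  obtain ⟨e, he⟩ := h𝒟.exists_classGroup_mulEquiv
  refine ⟨𝒟 0, inferInstance, this, e, fun γ hγ => ?_⟩
  have hX (n : ℕ) : algebraMap (MvPolynomial (Γ × ℕ) ℚ) (Localization S) (X (γ, n)) ∈ 𝒟 γ :=
    algebraMap_mem_localizationGrading 𝒜 _ (X_mem_indexGrading γ n)
  have hprime (n : ℕ) : Prime (algebraMap (MvPolynomial (Γ × ℕ) ℚ) (Localization S) (X (γ, n))) :=
    prime_algebraMap_degreeZeroDivisorSet X_prime (X_notMem_degreeZeroDivisorSet hγ n)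
  refine h𝒟.infinite_primesInClass hX hprime (fun m n h => ?_)
    fun n => he γ _ (hX n) (hprime n).ne_zero
  simpa [X_dvd_X] using
    dvd_of_algebraMap_degreeZeroDivisorSet_dvd X_prime (X_notMem_degreeZeroDivisorSet hγ m) h

end PolynomialGrading

theorem exists_isDedekindDomain_classGroup_addEquiv (A : Type u) [AddCommGroup A] :
    ∃ (D : Type u) (_ : CommRing D) (_ : IsDedekindDomain D),
      Nonempty (Additive (ClassGroup D) ≃+ A) ∧ ∀ g, (primesInClass D g).Infinite := by
  obtain ⟨D, _, _, e, he⟩ := exists_isDedekindDomain_classGroup_mulEquiv_of_twoUniqueSums (A →₀ ℤ)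
  let π : (A →₀ ℤ) →+ A := Finsupp.liftAddHom fun a => zmultiplesHom A a
  have hker (g : ClassGroup D) (hg : g ≠ 1) : (primesInClass D g).Nonempty := by
    simpa using (he (e.symm g).toAdd (by simpa using hg)).nonempty
  have hinf (a : Multiplicative A) :
      ∃ g, (π.toMultiplicative.comp e.symm.toMonoidHom) g = a ∧ (primesInClass D g).Infinite :=
    ⟨e (.ofAdd (Finsupp.single a.toAdd 1)), by simp [π], he _ (by simp)⟩
  obtain ⟨S, -, hS, ⟨eLoc⟩, hprimes⟩ :=
    exists_localization_classGroup_mulEquiv _ (fun g _ hg => hker g hg) hinf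
  exact ⟨Localization S, inferInstance, hS, ⟨MulEquiv.toAdditiveLeft eLoc⟩, hprimes⟩

theorem dedekind_realization_of_fg_family_general {ι : Type u} (G : ι → Type v)
    [∀ i, AddCommGroup (G i)] :
    ∃ (D : Type (max u v)) (_ : CommRing D) (_ : IsDedekindDomain D),
      ¬ IsField D ∧
      Nonempty (Additive (ClassGroup D) ≃+ ⨁ i, G i) ∧
      (∀ g, (primesInClass D g).Infinite) ∧
      ∀ i, ∃ (S : Submonoid D) (_ : S ≤ D⁰) (_ : IsDedekindDomain (Localization S)),
        Nonempty (Additive (ClassGroup (Localization S)) ≃+ G i) ∧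
        ∀ g, (primesInClass (Localization S) g).Infinite := by
  classical
  obtain ⟨D, _, _, ⟨e⟩, hprimes⟩ := exists_isDedekindDomain_classGroup_addEquiv (⨁ i, G i)
  refine ⟨D, inferInstance, inferInstance,
    not_isField_of_primesInClass_nonempty (hprimes 1).nonempty, ⟨e⟩, hprimes, fun i => ?_⟩
  let proj : Additive (ClassGroup D) →+ G i := (DFinsupp.evalAddMonoidHom i).comp e.toAddMonoidHom
  have hproj (x : G i) : proj (e.symm (DirectSum.of G i x)) = x := by
    change e (e.symm (DirectSum.of G i x)) i = x
    rw [e.apply_symm_apply, DirectSum.of_eq_same]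
  obtain ⟨S, hS, hD, ⟨eLoc⟩, hinf⟩ :=
    exists_localization_classGroup_mulEquiv (AddMonoidHom.toMultiplicativeRight proj)
      (fun g _ _ => (hprimes g).nonempty)
      fun x => ⟨(e.symm (DirectSum.of G i x.toAdd)).toMul,
        congrArg Multiplicative.ofAdd (hproj _), hprimes _⟩
  exact ⟨S, hS, hD, ⟨MulEquiv.toAdditiveLeft eLoc⟩, hinf⟩

/-- **Theorem B.** Given a family `(G i)_{i ∈ ℕ}` of finitely generated abelian groups,
there is a Dedekind domain `D` (not a field) such that:
(1) `Cl(D) ≅ ⨁_{i ∈ ℕ} G i`;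
(2) for each `i` there is a submonoid `Sᵢ ⊆ D \ {0}` with `Cl(D_{Sᵢ}) ≅ G i`
    (the localization again being a Dedekind domain);
(3) every class of `Cl(D)`, and every class of each `Cl(D_{Sᵢ})`, contains infinitely many
    nonzero prime ideals. -/
theorem dedekind_realization_of_fg_family (G : ℕ → Type) [∀ i, AddCommGroup (G i)]
    [∀ i, AddGroup.FG (G i)] :
    ∃ (D : Type) (_ : CommRing D) (_ : IsDedekindDomain D),
      ¬ IsField D ∧
      Nonempty (Additive (ClassGroup D) ≃+ ⨁ i, G i) ∧
      (∀ g : ClassGroup D,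
        { P : (Ideal D)⁰ | (P : Ideal D).IsPrime ∧ ClassGroup.mk0 P = g }.Infinite) ∧
      (∀ i : ℕ, ∃ (S : Submonoid D) (_ : S ≤ nonZeroDivisors D)
          (_ : IsDedekindDomain (Localization S)),
        Nonempty (Additive (ClassGroup (Localization S)) ≃+ G i) ∧
        ∀ g : ClassGroup (Localization S),
          { P : (Ideal (Localization S))⁰ |
            (P : Ideal (Localization S)).IsPrime ∧ ClassGroup.mk0 P = g }.Infinite) :=
  dedekind_realization_of_fg_family_general G
end

section
/- Let G be a countably generated abelian group of finite exponent, i.e., there is n ≥ 1 with n·g = 0 for all g ∈ G. Then there exists a Dedekind domain D that is not a field such that Cl(D) is isomorphic to G and every class of Cl(D) contains infinitely many nonzero prime ideals of D. -/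
open scoped nonZeroDivisors

/-!
Let `B` be a polynomial ring over a factorial domain, graded by an abelian group `G` through
weights of the variables, with infinitely many variables of every weight. Nonzero homogeneous
elements of `B` have homogeneous gcds. Invert the weight-zero elements `s` that no variable
divides and whose homogeneous divisors all have weight zero, and let `D` be the weight-zero part of
the result. If `f` and `f'` are homogeneous and coprime, then `f * X x + f' * X y` is such an `s`
for new variables `x` and `y` of weights opposite to those of `f` and `f'`, so coprime homogeneous
elements become comaximal. Hence every nonzero ideal of `D` consists of the weight-zero multiples of one
homogeneous element `h`, unique up to divisors of inverted elements, which have weight zero. The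
weight of `h` therefore identifies `Cl(D)` with `G`, and the variables of weight `g` give infinitely
many primes in the class of `g`.
-/

universe u

open MvPolynomial

section WeightedHomogeneous

variable {σ R G : Type*} [CommRing R] [AddCommGroup G] {w : σ → G}

theorem weightedHomogeneousComponent_add_mul {f : MvPolynomial σ R} {a : G}
    (hf : IsWeightedHomogeneous w f a) (p : MvPolynomial σ R) (m : G) :
    weightedHomogeneousComponent w (a + m) (f * p) = f * weightedHomogeneousComponent w m p := by
  classical
  let := weightedGradedAlgebra R w
  have decompose_eq (q : MvPolynomial σ R) (n : G) :
      (DirectSum.decompose (weightedHomogeneousSubmodule R w) q n : MvPolynomial σ R) =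
        weightedHomogeneousComponent w n q :=
    decompose'_apply R w q n
  rw [← decompose_eq, ← decompose_eq]
  exact DirectSum.coe_decompose_mul_add_of_left_mem (weightedHomogeneousSubmodule R w) hf

theorem isWeightedHomogeneous_right_of_mul [NoZeroDivisors R] {p q : MvPolynomial σ R} {a c : G}
    (hp0 : p ≠ 0) (hp : IsWeightedHomogeneous w p a) (hpq : IsWeightedHomogeneous w (p * q) c) :
    IsWeightedHomogeneous w q (c - a) := by
  have component_eq_zero : ∀ m ≠ c - a, weightedHomogeneousComponent w m q = 0 := by
    intro m hm
    have hne : a + m ≠ c := fun h => hm (eq_sub_of_add_eq' h)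
    have h := hpq.weightedHomogeneousComponent_ne (a + m) hne
    rw [weightedHomogeneousComponent_add_mul hp] at h
    exact (mul_eq_zero.1 h).resolve_left hp0
  rw [← finsum_weightedHomogeneousComponent w q, finsum_eq_single _ _ component_eq_zero]
  exact weightedHomogeneousComponent_isWeightedHomogeneous _ _

theorem isWeightedHomogeneous_zero_of_isUnit [IsReduced R] {u : MvPolynomial σ R}
    (hu : IsUnit u) : IsWeightedHomogeneous w u 0 := by
  obtain ⟨r, -, rfl⟩ := isUnit_iff_eq_C_of_isReduced.1 hu
  exact isWeightedHomogeneous_C w r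

theorem isWeightedHomogeneous_of_associated [IsReduced R] {p q : MvPolynomial σ R} {a : G}
    (h : Associated p q) (hp : IsWeightedHomogeneous w p a) : IsWeightedHomogeneous w q a := by
  obtain ⟨u, rfl⟩ := h
  simpa using hp.mul (isWeightedHomogeneous_zero_of_isUnit u.isUnit)

theorem dvd_weightedHomogeneousComponent {f p : MvPolynomial σ R} {a : G}
    (hf : IsWeightedHomogeneous w f a) (hfp : f ∣ p) (m : G) :
    f ∣ weightedHomogeneousComponent w m p := by
  obtain ⟨c, rfl⟩ := hfp
  rw [← add_sub_cancel a m, weightedHomogeneousComponent_add_mul hf]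
  exact dvd_mul_right _ _

theorem totalDegree_weightedHomogeneousComponent_le (m : G) (f : MvPolynomial σ R) :
    (weightedHomogeneousComponent w m f).totalDegree ≤ f.totalDegree := by
  classical
  refine totalDegree_le_of_support_subset ?_
  rw [support_weightedHomogeneousComponent]
  exact Finset.filter_subset _ _

theorem isWeightedHomogeneous_of_dvd_component [IsDomain R] {f : MvPolynomial σ R} {m : G}
    (hm : weightedHomogeneousComponent w m f ≠ 0) (hdvd : f ∣ weightedHomogeneousComponent w m f) :
    IsWeightedHomogeneous w f m := by
  obtain ⟨c, hc⟩ := hdvd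
  have hf0 : f ≠ 0 := by rintro rfl; simp at hm
  have hc0 : c ≠ 0 := by rintro rfl; simp [hc] at hm
  have hc_deg : c.totalDegree = 0 := by
    have hle := totalDegree_weightedHomogeneousComponent_le (w := w) m f
    rw [hc, totalDegree_mul_of_isDomain hf0 hc0] at hle
    lia
  have hc_hom : IsWeightedHomogeneous w c 0 := by
    rw [totalDegree_eq_zero_iff_eq_C.1 hc_deg]
    exact isWeightedHomogeneous_C w _
  have hcf : IsWeightedHomogeneous w (c * f) m := by
    rw [mul_comm, ← hc]
    exact weightedHomogeneousComponent_isWeightedHomogeneous _ _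
  simpa using isWeightedHomogeneous_right_of_mul hc0 hc_hom hcf

theorem exists_isWeightedHomogeneous_lcm [IsDomain R] [GCDMonoid (MvPolynomial σ R)]
    {f f' : MvPolynomial σ R} {a b : G} (hf0 : f ≠ 0) (hf0' : f' ≠ 0)
    (hf : IsWeightedHomogeneous w f a) (hf' : IsWeightedHomogeneous w f' b) :
    ∃ l, IsWeightedHomogeneous w (lcm f f') l := by
  have hl0 : lcm f f' ≠ 0 := fun h => ((lcm_eq_zero_iff f f').1 h).elim hf0 hf0'
  obtain ⟨m, hm⟩ : ∃ m, weightedHomogeneousComponent w m (lcm f f') ≠ 0 := by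
    by_contra! h
    exact hl0 (by rw [← finsum_weightedHomogeneousComponent w (lcm f f')]; simp [h])
  exact ⟨m, isWeightedHomogeneous_of_dvd_component hm <|
    lcm_dvd (dvd_weightedHomogeneousComponent hf (dvd_lcm_left f f') m)
      (dvd_weightedHomogeneousComponent hf' (dvd_lcm_right f f') m)⟩

theorem exists_isWeightedHomogeneous_gcd [IsDomain R] [GCDMonoid (MvPolynomial σ R)]
    {f f' : MvPolynomial σ R} {a b : G} (hf0 : f ≠ 0) (hf0' : f' ≠ 0)
    (hf : IsWeightedHomogeneous w f a) (hf' : IsWeightedHomogeneous w f' b) :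
    ∃ e, IsWeightedHomogeneous w (gcd f f') e := by
  obtain ⟨l, hl⟩ := exists_isWeightedHomogeneous_lcm hf0 hf0' hf hf'
  have hl0 : lcm f f' ≠ 0 := fun h => ((lcm_eq_zero_iff f f').1 h).elim hf0 hf0'
  have hprod : IsWeightedHomogeneous w (lcm f f' * gcd f f') (a + b) := by
    rw [mul_comm]
    exact isWeightedHomogeneous_of_associated (gcd_mul_lcm f f').symm (hf.mul hf')
  exact ⟨_, isWeightedHomogeneous_right_of_mul hl0 hl hprod⟩

theorem exists_isWeightedHomogeneous_isRelPrime_factors [IsDomain R] [UniqueFactorizationMonoid R]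
    {f f' : MvPolynomial σ R} {a b : G} (hf0 : f ≠ 0) (hf0' : f' ≠ 0)
    (hf : IsWeightedHomogeneous w f a) (hf' : IsWeightedHomogeneous w f' b) :
    ∃ (d p q : MvPolynomial σ R) (e : G), IsWeightedHomogeneous w d e ∧
      IsWeightedHomogeneous w p (a - e) ∧ IsWeightedHomogeneous w q (b - e) ∧
      f = d * p ∧ f' = d * q ∧ IsRelPrime p q := by
  let : GCDMonoid (MvPolynomial σ R) := UniqueFactorizationMonoid.toGCDMonoid _
  obtain ⟨p, q, hp, hq, hpq⟩ := extract_gcd f f'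
  obtain ⟨e, he⟩ := exists_isWeightedHomogeneous_gcd hf0 hf0' hf hf'
  have hd0 : gcd f f' ≠ 0 := fun h => hf0 ((gcd_eq_zero_iff f f').1 h).1
  exact ⟨gcd f f', p, q, e, he, isWeightedHomogeneous_right_of_mul hd0 he (hp ▸ hf),
    isWeightedHomogeneous_right_of_mul hd0 he (hq ▸ hf'), hp, hq,
    fun _ hzp hzq => isUnit_of_dvd_unit (dvd_gcd hzp hzq) hpq⟩

end WeightedHomogeneous

section FreshVariables

variable {σ R : Type*} [CommRing R] [IsDomain R]

theorem not_X_dvd_of_notMem_vars {v : σ} {f : MvPolynomial σ R} (hf : f ≠ 0)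
    (hv : v ∉ f.vars) : ¬ X v ∣ f := by
  classical
  rintro ⟨c, rfl⟩
  have hc : c ≠ 0 := right_ne_zero_of_mul hf
  have hdeg : degreeOf v (X v * c) = 0 := by
    rwa [vars_def, Multiset.mem_toFinset, ← Multiset.count_eq_zero, ← degreeOf_def] at hv
  rw [degreeOf_mul_eq (X_ne_zero v) hc, degreeOf_X_self] at hdeg
  lia

variable [UniqueFactorizationMonoid R]

theorem irreducible_mul_X_add_mul_X {f f' : MvPolynomial σ R} {x y : σ} (hf0 : f ≠ 0)
    (h : IsRelPrime f f') (hxy : x ≠ y) (hxf : x ∉ f.vars) (hxf' : x ∉ f'.vars)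
    (hyf : y ∉ f.vars) : Irreducible (f * X x + f' * X y) := by
  classical
  refine irreducible_mul_X_add _ _ _ hf0 hxf (fun hx => ?_) (h.mul_right ?_)
  · rcases Finset.mem_union.1 (vars_mul _ _ hx) with hx | hx
    · exact hxf' hx
    · exact hxy (by simpa [vars_X] using hx)
  · exact (((X_prime (i := y)).irreducible.isRelPrime_iff_not_dvd).2
      (not_X_dvd_of_notMem_vars hf0 hyf)).symm

theorem not_X_dvd_mul_X_add_mul_X {f f' : MvPolynomial σ R} {x y : σ} (hf0 : f ≠ 0)
    (hf0' : f' ≠ 0) (h : IsRelPrime f f') (hxy : x ≠ y) (hxf : x ∉ f.vars) (hxf' : x ∉ f'.vars)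
    (hyf : y ∉ f.vars) (v : σ) : ¬ X v ∣ f * X x + f' * X y := by
  classical
  intro hv
  by_cases hvx : v = x
  · subst hvx
    rcases X_prime.dvd_or_dvd ((dvd_add_right (dvd_mul_left _ f)).1 hv) with hd | hd
    · exact not_X_dvd_of_notMem_vars hf0' hxf' hd
    · exact hxy (X_dvd_X.1 hd)
  by_cases hvy : v = y
  · subst hvy
    rcases X_prime.dvd_or_dvd ((dvd_add_left (dvd_mul_left _ f')).1 hv) with hd | hd
    · exact not_X_dvd_of_notMem_vars hf0 hyf hd
    · exact hxy (X_dvd_X.1 hd).symm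
  -- Otherwise `X v` is associated to a polynomial that vanishes when `x` and `y` are set to zero.
  have hirr := irreducible_mul_X_add_mul_X hf0 h hxy hxf hxf' hyf
  obtain ⟨c, hc⟩ := ((X_prime (i := v)).irreducible.associated_of_dvd hirr hv).symm.dvd
  let φ : MvPolynomial σ R →ₐ[R] MvPolynomial σ R := aeval fun z => if z = x ∨ z = y then 0 else X z
  simpa [φ, hvx, hvy] using congrArg φ hc

end FreshVariables

/-- The elements inverted in the construction of `RealizationDomain`. Condition `not_X_dvd` keeps
the variables of weight zero from becoming units: the other conditions do not exclude them. -/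
structure IsDenominator {σ R G : Type*} [CommRing R] [AddCommGroup G] (w : σ → G)
    (s : MvPolynomial σ R) : Prop where
  ne_zero : s ≠ 0
  weight_zero : IsWeightedHomogeneous w s 0
  weight_eq_zero_of_dvd : ∀ d g, d ∣ s → IsWeightedHomogeneous w d g → g = 0
  not_X_dvd : ∀ v, ¬ X v ∣ s

section Denominators

variable {σ R G : Type*} [CommRing R] [IsDomain R] [AddCommGroup G] {w : σ → G}

theorem isDenominator_one : IsDenominator w (1 : MvPolynomial σ R) where
  ne_zero := one_ne_zero
  weight_zero := isWeightedHomogeneous_one R w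
  weight_eq_zero_of_dvd _ _ hd hg := hg.inj_right (isUnit_of_dvd_one hd).ne_zero
    (isWeightedHomogeneous_zero_of_isUnit (isUnit_of_dvd_one hd))
  not_X_dvd _ h := X_prime.not_isUnit (isUnit_of_dvd_one h)

theorem isDenominator_of_irreducible {p : MvPolynomial σ R} (hp : Irreducible p)
    (hp_hom : IsWeightedHomogeneous w p 0) (hp_X : ∀ v, ¬ X v ∣ p) : IsDenominator w p where
  ne_zero := hp.ne_zero
  weight_zero := hp_hom
  weight_eq_zero_of_dvd d g hd hg := by
    have hd0 : d ≠ 0 := ne_zero_of_dvd_ne_zero hp.ne_zero hd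
    rcases hp.dvd_iff.1 hd with hu | ha
    · exact hg.inj_right hd0 (isWeightedHomogeneous_zero_of_isUnit hu)
    · exact hg.inj_right hd0 (isWeightedHomogeneous_of_associated ha hp_hom)
  not_X_dvd := hp_X

variable [UniqueFactorizationMonoid R]

theorem IsDenominator.mul {s t : MvPolynomial σ R} (hs : IsDenominator w s)
    (ht : IsDenominator w t) : IsDenominator w (s * t) where
  ne_zero := mul_ne_zero hs.ne_zero ht.ne_zero
  weight_zero := by simpa using hs.weight_zero.mul ht.weight_zero
  weight_eq_zero_of_dvd d g hd hg := by
    have hd0 : d ≠ 0 := ne_zero_of_dvd_ne_zero (mul_ne_zero hs.ne_zero ht.ne_zero) hd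
    obtain ⟨c, p, q, e, hc, hp, -, rfl, rfl, hpq⟩ :=
      exists_isWeightedHomogeneous_isRelPrime_factors hd0 hs.ne_zero hg hs.weight_zero
    have hpt : p ∣ t := by
      rw [mul_assoc, mul_dvd_mul_iff_left (left_ne_zero_of_mul hd0)] at hd
      exact hpq.dvd_of_dvd_mul_left hd
    have he : e = 0 := hs.weight_eq_zero_of_dvd c e (dvd_mul_right c q) hc
    simpa [he] using ht.weight_eq_zero_of_dvd p _ hpt hp
  not_X_dvd v h := (X_prime.dvd_or_dvd h).elim (hs.not_X_dvd v) (ht.not_X_dvd v)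

end Denominators

section Comaximality

theorem exists_notMem_weight_eq {σ G : Type*} (w : σ → G) [∀ g, Infinite (w ⁻¹' {g})]
    (s : Finset σ) (g : G) : ∃ v ∉ s, w v = g := by
  obtain ⟨v, hv, hvs⟩ :=
    (Set.infinite_coe_iff.1 (inferInstance : Infinite (w ⁻¹' {g}))).exists_notMem_finset s
  exact ⟨v, hvs, hv⟩

variable {σ R G : Type*} [CommRing R] [AddCommGroup G] {w : σ → G} [∀ g, Infinite (w ⁻¹' {g})]

variable (R w) in
theorem exists_isWeightedHomogeneous_X (g : G) :
    ∃ v, IsWeightedHomogeneous w (X v : MvPolynomial σ R) g := by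
  obtain ⟨v, -, rfl⟩ := exists_notMem_weight_eq w ∅ g
  exact ⟨v, isWeightedHomogeneous_X R w v⟩

variable [IsDomain R] [UniqueFactorizationMonoid R]

theorem exists_isDenominator_mul_add_mul {f f' : MvPolynomial σ R} {a b : G} (hf0 : f ≠ 0)
    (hf0' : f' ≠ 0) (hf : IsWeightedHomogeneous w f a) (hf' : IsWeightedHomogeneous w f' b)
    (h : IsRelPrime f f') :
    ∃ p q, IsWeightedHomogeneous w p (-a) ∧ IsWeightedHomogeneous w q (-b) ∧
      IsDenominator w (f * p + f' * q) := by
  classical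
  obtain ⟨x, hx, hxa⟩ := exists_notMem_weight_eq w (f.vars ∪ f'.vars) (-a)
  obtain ⟨y, hy, hyb⟩ := exists_notMem_weight_eq w (insert x f.vars) (-b)
  simp only [Finset.mem_union, Finset.mem_insert, not_or] at hx hy
  have hX : IsWeightedHomogeneous w (X x : MvPolynomial σ R) (-a) :=
    hxa ▸ isWeightedHomogeneous_X R w x
  have hY : IsWeightedHomogeneous w (X y : MvPolynomial σ R) (-b) :=
    hyb ▸ isWeightedHomogeneous_X R w y
  have hhom : IsWeightedHomogeneous w (f * X x + f' * X y) 0 :=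
    .add (by simpa using hf.mul hX) (by simpa using hf'.mul hY)
  have hxy : x ≠ y := Ne.symm hy.1
  exact ⟨X x, X y, hX, hY, isDenominator_of_irreducible
    (irreducible_mul_X_add_mul_X hf0 h hxy hx.1 hx.2 hy.2) hhom
    (not_X_dvd_mul_X_add_mul_X hf0 hf0' h hxy hx.1 hx.2 hy.2)⟩

variable (R w) in
theorem exists_isDenominator_mul_add_mul_of_weight (g : G) :
    ∃ x y p q : MvPolynomial σ R, IsWeightedHomogeneous w x (-g) ∧
      IsWeightedHomogeneous w y (-g) ∧ IsWeightedHomogeneous w p g ∧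
      IsWeightedHomogeneous w q g ∧ IsDenominator w (x * p + y * q) := by
  obtain ⟨x, -, hx⟩ := exists_notMem_weight_eq w ∅ (-g)
  obtain ⟨y, hxy, hy⟩ := exists_notMem_weight_eq w {x} (-g)
  have hX : IsWeightedHomogeneous w (X x : MvPolynomial σ R) (-g) :=
    hx ▸ isWeightedHomogeneous_X R w x
  have hY : IsWeightedHomogeneous w (X y : MvPolynomial σ R) (-g) :=
    hy ▸ isWeightedHomogeneous_X R w y
  have hrel : IsRelPrime (X x : MvPolynomial σ R) (X y) :=
    X_prime.irreducible.isRelPrime_iff_not_dvd.2 fun h =>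
      hxy (Finset.mem_singleton.2 (X_dvd_X.1 h).symm)
  obtain ⟨p, q, hp, hq, hs⟩ :=
    exists_isDenominator_mul_add_mul (X_ne_zero x) (X_ne_zero y) hX hY hrel
  rw [neg_neg] at hp hq
  exact ⟨X x, X y, p, q, hX, hY, hp, hq, hs⟩

end Comaximality

section RealizationDomain

variable (R : Type*) {σ G : Type*} [CommRing R] [AddCommGroup G] (w : σ → G)

/-- The polynomials all of whose monomials have weight zero. -/
noncomputable def weightZeroSubring : Subring (MvPolynomial σ R) :=
  let := WeightedHomogeneousSubmodule.gradedMonoid (R := R) (w := w)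
  SetLike.GradeZero.subring (weightedHomogeneousSubmodule R w)

variable [IsDomain R] [UniqueFactorizationMonoid R]

/-- The submonoid formed by the elements satisfying `IsDenominator`. -/
noncomputable def denominators : Submonoid (weightZeroSubring R w) where
  carrier := {s | IsDenominator w (s : MvPolynomial σ R)}
  mul_mem' hs ht := hs.mul ht
  one_mem' := isDenominator_one

theorem denominators_le_nonZeroDivisors : denominators R w ≤ (weightZeroSubring R w)⁰ :=
  fun _ hs => mem_nonZeroDivisors_of_ne_zero fun h => hs.ne_zero (congrArg Subtype.val h)

/-- The Dedekind domain with class group `G`, when `w` takes every value infinitely often. -/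
abbrev RealizationDomain := Localization (denominators R w)

instance : IsDomain (RealizationDomain R w) :=
  IsLocalization.isDomain_localization (denominators_le_nonZeroDivisors R w)

theorem algebraMap_realizationDomain_injective :
    Function.Injective (algebraMap (weightZeroSubring R w) (RealizationDomain R w)) :=
  IsLocalization.injective _ (denominators_le_nonZeroDivisors R w)

end RealizationDomain

section DivisorIdeal

variable {R σ G : Type*} [CommRing R] [AddCommGroup G] (w : σ → G)

/-- The multiples of `h` of weight zero, as an ideal of the weight-zero ring. -/
noncomputable def weightZeroMultiples (h : MvPolynomial σ R) : Ideal (weightZeroSubring R w) :=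
  (Ideal.span {h}).comap (weightZeroSubring R w).subtype

variable {w} in
theorem mem_weightZeroMultiples {h : MvPolynomial σ R} {a : weightZeroSubring R w} :
    a ∈ weightZeroMultiples w h ↔ h ∣ a :=
  Ideal.mem_span_singleton

theorem weightZeroMultiples_coe [IsDomain R] (a : weightZeroSubring R w) :
    weightZeroMultiples w (a : MvPolynomial σ R) = Ideal.span {a} := by
  ext b
  rw [mem_weightZeroMultiples, Ideal.mem_span_singleton]
  refine ⟨fun ⟨c, hc⟩ => ?_, map_dvd (weightZeroSubring R w).subtype⟩
  by_cases ha : (a : MvPolynomial σ R) = 0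
  · exact ⟨0, Subtype.ext (by simp [hc, ha])⟩
  · have hc_hom : IsWeightedHomogeneous w c (0 - 0) :=
      isWeightedHomogeneous_right_of_mul ha a.2 (hc ▸ b.2)
    exact ⟨⟨c, by rwa [sub_zero] at hc_hom⟩, Subtype.ext hc⟩

variable [IsDomain R] [UniqueFactorizationMonoid R]

/-- The ideal of `RealizationDomain R w` whose divisor is the polynomial `h`; it is meant for
homogeneous `h`. -/
noncomputable def divisorIdeal (h : MvPolynomial σ R) : Ideal (RealizationDomain R w) :=
  (weightZeroMultiples w h).map (algebraMap _ _)

variable {w}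

theorem algebraMap_mem_divisorIdeal {h : MvPolynomial σ R} {a : weightZeroSubring R w} :
    algebraMap _ _ a ∈ divisorIdeal w h ↔
      ∃ s : MvPolynomial σ R, IsDenominator w s ∧ h ∣ s * (a : MvPolynomial σ R) := by
  rw [divisorIdeal, IsLocalization.algebraMap_mem_map_algebraMap_iff (denominators R w)]
  exact ⟨fun ⟨s, hs, hd⟩ => ⟨s, hs, mem_weightZeroMultiples.1 hd⟩,
    fun ⟨s, hs, hd⟩ => ⟨⟨s, hs.weight_zero⟩, hs, mem_weightZeroMultiples.2 hd⟩⟩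

theorem divisorIdeal_coe (a : weightZeroSubring R w) :
    divisorIdeal w (a : MvPolynomial σ R) = Ideal.span {algebraMap _ _ a} := by
  rw [divisorIdeal, weightZeroMultiples_coe, Ideal.map_span, Set.image_singleton]

theorem IsDenominator.mem_under_of_mul_mem {I : Ideal (RealizationDomain R w)}
    {s a : weightZeroSubring R w} (hs : IsDenominator w (s : MvPolynomial σ R))
    (hsa : s * a ∈ I.under _) : a ∈ I.under _ := by
  have hunit : IsUnit (algebraMap _ (RealizationDomain R w) s) :=
    IsLocalization.map_units _ (⟨s, hs⟩ : denominators R w)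
  rwa [Ideal.mem_comap, map_mul, Ideal.unit_mul_mem_iff_mem _ hunit] at hsa

variable [∀ g, Infinite (w ⁻¹' {g})]

theorem divisorIdeal_mul {h h' : MvPolynomial σ R} {g g' : G} (h0 : h ≠ 0) (h0' : h' ≠ 0)
    (hh : IsWeightedHomogeneous w h g) (hh' : IsWeightedHomogeneous w h' g') :
    divisorIdeal w (h * h') = divisorIdeal w h * divisorIdeal w h' := by
  refine le_antisymm (Ideal.map_le_iff_le_comap.2 fun a ha => ?_) ?_
  · obtain ⟨c, hc⟩ := mem_weightZeroMultiples.1 ha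
    have hc_hom : IsWeightedHomogeneous w c (0 - (g + g')) :=
      isWeightedHomogeneous_right_of_mul (mul_ne_zero h0 h0') (hh.mul hh') (hc ▸ a.2)
    obtain ⟨x, y, p, q, hx, hy, hp, hq, hs⟩ := exists_isDenominator_mul_add_mul_of_weight R w g
    have weight_left {z : MvPolynomial σ R} (hz : IsWeightedHomogeneous w z (-g)) :
        IsWeightedHomogeneous w (h * z) 0 := by simpa using hh.mul hz
    have weight_right {r : MvPolynomial σ R} (hr : IsWeightedHomogeneous w r g) :
        IsWeightedHomogeneous w (h' * (c * r)) 0 := by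
      convert hh'.mul (hc_hom.mul hr) using 1; abel
    have mem_mul {z r : MvPolynomial σ R} (hz : IsWeightedHomogeneous w z (-g))
        (hr : IsWeightedHomogeneous w r g) :
        algebraMap _ (RealizationDomain R w)
          (⟨_, weight_left hz⟩ * ⟨_, weight_right hr⟩ : weightZeroSubring R w) ∈
          divisorIdeal w h * divisorIdeal w h' := by
      rw [map_mul]
      exact Ideal.mul_mem_mul
        (Ideal.mem_map_of_mem _ (mem_weightZeroMultiples.2 (dvd_mul_right _ _)))
        (Ideal.mem_map_of_mem _ (mem_weightZeroMultiples.2 (dvd_mul_right _ _)))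
    refine IsDenominator.mem_under_of_mul_mem (s := ⟨_, hs.weight_zero⟩) hs ?_
    -- Multiplied by `x * p + y * q`, a multiple of the product splits into weight-zero factors.
    have hsa : (⟨_, hs.weight_zero⟩ * a : weightZeroSubring R w) =
        ⟨_, weight_left hx⟩ * ⟨_, weight_right hp⟩ + ⟨_, weight_left hy⟩ * ⟨_, weight_right hq⟩ :=
      Subtype.ext (by
        change (x * p + y * q) * (a : MvPolynomial σ R) =
          h * x * (h' * (c * p)) + h * y * (h' * (c * q))
        rw [hc]; ring)
    rw [hsa, Ideal.mem_comap, map_add]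
    exact Ideal.add_mem _ (mem_mul hx hp) (mem_mul hy hq)
  · rw [divisorIdeal, divisorIdeal, ← Ideal.map_mul]
    refine Ideal.map_mono (Ideal.mul_le.2 fun a ha b hb => ?_)
    exact mem_weightZeroMultiples.2
      (mul_dvd_mul (mem_weightZeroMultiples.1 ha) (mem_weightZeroMultiples.1 hb))

theorem divisorIdeal_ne_bot {h : MvPolynomial σ R} {g : G} (h0 : h ≠ 0)
    (hh : IsWeightedHomogeneous w h g) : divisorIdeal w h ≠ ⊥ := by
  obtain ⟨v, hv⟩ := exists_isWeightedHomogeneous_X R w (-g)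
  have hhv : IsWeightedHomogeneous w (h * X v) 0 := by simpa using hh.mul hv
  intro hbot
  have hmem : algebraMap _ _ (⟨_, hhv⟩ : weightZeroSubring R w) ∈ divisorIdeal w h :=
    Ideal.mem_map_of_mem _ (mem_weightZeroMultiples.2 (dvd_mul_right _ _))
  rw [hbot, Ideal.mem_bot, map_eq_zero_iff _ (algebraMap_realizationDomain_injective R w)] at hmem
  exact mul_ne_zero h0 (X_ne_zero v) (congrArg Subtype.val hmem)

theorem exists_dvd_dvd_weightZeroMultiples_le {I : Ideal (RealizationDomain R w)}
    {f : MvPolynomial σ R} {g : G} (hf0 : f ≠ 0) (hf : IsWeightedHomogeneous w f g)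
    (hfI : weightZeroMultiples w f ≤ I.under _) {a : weightZeroSubring R w}
    (ha0 : (a : MvPolynomial σ R) ≠ 0) (ha : a ∈ I.under _) :
    ∃ d e, IsWeightedHomogeneous w d e ∧ d ∣ f ∧ d ∣ a ∧ weightZeroMultiples w d ≤ I.under _ := by
  obtain ⟨d, p, q, e, hd, hp, hq, hfp, haq, hpq⟩ :=
    exists_isWeightedHomogeneous_isRelPrime_factors hf0 ha0 hf a.2
  obtain ⟨y, z, hy, hz, hs⟩ := exists_isDenominator_mul_add_mul
    (right_ne_zero_of_mul (hfp ▸ hf0)) (right_ne_zero_of_mul (haq ▸ ha0)) hp hq hpq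
  refine ⟨d, e, hd, ⟨p, hfp⟩, ⟨q, haq⟩, fun b hb => ?_⟩
  obtain ⟨c, hc⟩ := mem_weightZeroMultiples.1 hb
  have hc_hom : IsWeightedHomogeneous w c (0 - e) :=
    isWeightedHomogeneous_right_of_mul (left_ne_zero_of_mul (hfp ▸ hf0)) hd (hc ▸ b.2)
  have hfyc : IsWeightedHomogeneous w (f * (y * c)) 0 := by
    convert hf.mul (hy.mul hc_hom) using 1; abel
  have hzc : IsWeightedHomogeneous w (z * c) 0 := by
    convert hz.mul hc_hom using 1; abel
  have hsb : (⟨_, hs.weight_zero⟩ * b : weightZeroSubring R w) = ⟨_, hfyc⟩ + a * ⟨_, hzc⟩ :=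
    Subtype.ext (by
      change (p * y + q * z) * (b : MvPolynomial σ R) = f * (y * c) + a * (z * c)
      rw [hc, haq, hfp]; ring)
  refine IsDenominator.mem_under_of_mul_mem (s := ⟨_, hs.weight_zero⟩) hs ?_
  rw [hsb]
  exact Ideal.add_mem _ (hfI (mem_weightZeroMultiples.2 (dvd_mul_right _ _)))
    (Ideal.mul_mem_right _ _ ha)

theorem exists_divisorIdeal_eq {I : Ideal (RealizationDomain R w)} (hI : I ≠ ⊥) :
    ∃ h g, h ≠ 0 ∧ IsWeightedHomogeneous w h g ∧ I = divisorIdeal w h := by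
  let S : Set (MvPolynomial σ R) :=
    {f | f ≠ 0 ∧ (∃ g, IsWeightedHomogeneous w f g) ∧ weightZeroMultiples w f ≤ I.under _}
  have S_nonempty : S.Nonempty := by
    have hunder : I.under (weightZeroSubring R w) ≠ ⊥ := fun h =>
      hI (by rw [← IsLocalization.map_under (denominators R w) _ I, h, Ideal.map_bot])
    obtain ⟨a, ha, ha0⟩ := Submodule.exists_mem_ne_zero_of_ne_bot hunder
    refine ⟨a, fun h => ha0 (Subtype.ext h), ⟨0, a.2⟩, ?_⟩
    rwa [weightZeroMultiples_coe, Ideal.span_singleton_le_iff_mem]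
  obtain ⟨h, ⟨h0, ⟨g, hg⟩, hhI⟩, hmin⟩ := wellFounded_dvdNotUnit.has_min S S_nonempty
  refine ⟨h, g, h0, hg, ?_⟩
  suffices hle : I.under _ ≤ weightZeroMultiples w h by
    rw [divisorIdeal, ← le_antisymm hle hhI, IsLocalization.map_under (denominators R w)]
  intro a ha
  rw [mem_weightZeroMultiples]
  by_cases ha0 : (a : MvPolynomial σ R) = 0
  · exact ha0 ▸ dvd_zero h
  obtain ⟨d, e, hd, ⟨p, hp⟩, hda, hdI⟩ := exists_dvd_dvd_weightZeroMultiples_le h0 hg hhI ha0 ha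
  have hd0 : d ≠ 0 := left_ne_zero_of_mul (hp ▸ h0)
  have hpu : IsUnit p := by
    by_contra hpu
    exact hmin d ⟨hd0, ⟨e, hd⟩, hdI⟩ ⟨hd0, p, hpu, hp⟩
  rwa [hp, hpu.mul_right_dvd]

theorem exists_isDenominator_dvd_mul_of_divisorIdeal_le {f f' : MvPolynomial σ R} {g : G}
    (hf : IsWeightedHomogeneous w f g) (h : divisorIdeal w f ≤ divisorIdeal w f') :
    ∃ s, IsDenominator w s ∧ f' ∣ f * s := by
  have dvd_of_weight {z : MvPolynomial σ R} (hz : IsWeightedHomogeneous w z (-g)) :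
      ∃ s, IsDenominator w s ∧ f' ∣ s * (f * z) := by
    have hfz : IsWeightedHomogeneous w (f * z) 0 := by simpa using hf.mul hz
    let a : weightZeroSubring R w := ⟨f * z, hfz⟩
    have ha : a ∈ weightZeroMultiples w f := mem_weightZeroMultiples.2 (dvd_mul_right f z)
    exact (algebraMap_mem_divisorIdeal (a := a)).1 (h (Ideal.mem_map_of_mem _ ha))
  obtain ⟨x, y, p, q, hx, hy, -, -, hu⟩ := exists_isDenominator_mul_add_mul_of_weight R w g
  obtain ⟨s, hs, hsx⟩ := dvd_of_weight hx
  obtain ⟨t, ht, hty⟩ := dvd_of_weight hy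
  refine ⟨s * t * (x * p + y * q), (hs.mul ht).mul hu, ?_⟩
  have hsum : f * (s * t * (x * p + y * q)) =
      s * (f * x) * (t * p) + t * (f * y) * (s * q) := by ring
  rw [hsum]
  exact dvd_add (hsx.mul_right _) (hty.mul_right _)

theorem weight_eq_of_divisorIdeal_eq {f f' : MvPolynomial σ R} {g g' : G} (hf0 : f ≠ 0)
    (hf0' : f' ≠ 0) (hf : IsWeightedHomogeneous w f g) (hf' : IsWeightedHomogeneous w f' g')
    (h : divisorIdeal w f = divisorIdeal w f') : g = g' := by
  obtain ⟨s, hs, c, hc⟩ := exists_isDenominator_dvd_mul_of_divisorIdeal_le hf h.le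
  obtain ⟨t, ht, c', hc'⟩ := exists_isDenominator_dvd_mul_of_divisorIdeal_le hf' h.ge
  have hst : s * t = c * c' := by
    apply mul_left_cancel₀ (mul_ne_zero hf0 hf0')
    calc f * f' * (s * t) = f * s * (f' * t) := by ring
      _ = f * f' * (c * c') := by rw [hc, hc']; ring
  have hc_hom : IsWeightedHomogeneous w c (g + 0 - g') :=
    isWeightedHomogeneous_right_of_mul hf0' hf' (hc ▸ hf.mul hs.weight_zero)
  have hweight := (hs.mul ht).weight_eq_zero_of_dvd c _ ⟨c', hst⟩ hc_hom
  rwa [add_zero, sub_eq_zero] at hweight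

end DivisorIdeal

section Dedekind

theorem isDedekindDomain_of_exists_mul_eq_span_singleton {A : Type*} [CommRing A] [IsDomain A]
    (H : ∀ I : Ideal A, I ≠ ⊥ → ∃ (J : Ideal A) (x : A), x ≠ 0 ∧ I * J = Ideal.span {x}) :
    IsDedekindDomain A := by
  rw [isDedekindDomain_iff_mul_inv_cancel (K := FractionRing A)]
  intro I hI
  rw [FractionalIdeal.mul_inv_cancel_iff_isUnit]
  have isUnit_spanSingleton {x : FractionRing A} (hx : x ≠ 0) :
      IsUnit (FractionalIdeal.spanSingleton A⁰ x) :=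
    .of_mul_eq_one _ (FractionalIdeal.spanSingleton_mul_inv _ hx)
  obtain ⟨a, J, ha, rfl⟩ := FractionalIdeal.exists_eq_spanSingleton_mul I
  have hJ : J ≠ ⊥ := by rintro rfl; simp at hI
  obtain ⟨J', x, hx, hJJ'⟩ := H J hJ
  refine (isUnit_spanSingleton (inv_ne_zero (by simpa using ha))).mul ?_
  refine isUnit_of_mul_isUnit_left (y := (J' : FractionalIdeal A⁰ (FractionRing A))) ?_
  rw [← FractionalIdeal.coeIdeal_mul, hJJ', FractionalIdeal.coeIdeal_span_singleton]
  exact isUnit_spanSingleton (by simpa using hx)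

variable {R σ G : Type*} [CommRing R] [IsDomain R] [UniqueFactorizationMonoid R]
  [AddCommGroup G] {w : σ → G} [∀ g, Infinite (w ⁻¹' {g})]

theorem divisorIdeal_mul_eq_span_singleton {h h' : MvPolynomial σ R} {g : G} (h0 : h ≠ 0)
    (h0' : h' ≠ 0) (hh : IsWeightedHomogeneous w h g) (hh' : IsWeightedHomogeneous w h' (-g)) :
    ∃ x ≠ 0, divisorIdeal w h * divisorIdeal w h' = Ideal.span {x} := by
  have hhh' : IsWeightedHomogeneous w (h * h') 0 := by simpa using hh.mul hh'
  refine ⟨algebraMap (weightZeroSubring R w) _ ⟨_, hhh'⟩, ?_, ?_⟩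
  · rw [Ne, map_eq_zero_iff _ (algebraMap_realizationDomain_injective R w)]
    exact fun h => mul_ne_zero h0 h0' (congrArg Subtype.val h)
  · rw [← divisorIdeal_coe, divisorIdeal_mul h0 h0' hh hh']

instance : IsDedekindDomain (RealizationDomain R w) := by
  refine isDedekindDomain_of_exists_mul_eq_span_singleton fun I hI => ?_
  obtain ⟨h, g, h0, hg, rfl⟩ := exists_divisorIdeal_eq hI
  obtain ⟨v, hv⟩ := exists_isWeightedHomogeneous_X R w (-g)
  exact ⟨_, divisorIdeal_mul_eq_span_singleton h0 (X_ne_zero v) hg hv⟩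

end Dedekind

section VariableIdeals

variable {R σ G : Type*} [CommRing R] [IsDomain R] [UniqueFactorizationMonoid R]
  [AddCommGroup G] (w : σ → G)

theorem isPrime_divisorIdeal_X (v : σ) : (divisorIdeal w (X v : MvPolynomial σ R)).IsPrime := by
  have hprime : (Ideal.span {(X v : MvPolynomial σ R)}).IsPrime :=
    (Ideal.span_singleton_prime (X_ne_zero v)).2 X_prime
  refine IsLocalization.isPrime_of_isPrime_disjoint (denominators R w) _ _ (hprime.comap _) ?_
  exact Set.disjoint_left.2 fun s hs hX => hs.not_X_dvd v (mem_weightZeroMultiples.1 hX)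

variable (R) [∀ g, Infinite (w ⁻¹' {g})]

theorem divisorIdeal_X_injective :
    Function.Injective fun v => divisorIdeal w (X v : MvPolynomial σ R) := by
  intro v v' h
  obtain ⟨s, hs, hdvd⟩ :=
    exists_isDenominator_dvd_mul_of_divisorIdeal_le (isWeightedHomogeneous_X R w v) h.le
  exact (X_dvd_X.1 ((X_prime.dvd_or_dvd hdvd).resolve_right (hs.not_X_dvd v'))).symm

theorem not_isField_realizationDomain : ¬ IsField (RealizationDomain R w) := by
  obtain ⟨v, hv⟩ := exists_isWeightedHomogeneous_X R w 0
  exact Ring.not_isField_iff_exists_prime.2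
    ⟨_, divisorIdeal_ne_bot (X_ne_zero v) hv, isPrime_divisorIdeal_X w v⟩

end VariableIdeals

section ClassGroup

variable {R σ G : Type*} [CommRing R] [IsDomain R] [UniqueFactorizationMonoid R]
  [AddCommGroup G] {w : σ → G} [∀ g, Infinite (w ⁻¹' {g})]

theorem mk0_eq_mk0_of_weight_eq {I I' : (Ideal (RealizationDomain R w))⁰}
    {f f' : MvPolynomial σ R} {g : G} (hf0 : f ≠ 0) (hf0' : f' ≠ 0)
    (hf : IsWeightedHomogeneous w f g) (hf' : IsWeightedHomogeneous w f' g)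
    (hI : (I : Ideal (RealizationDomain R w)) = divisorIdeal w f)
    (hI' : (I' : Ideal (RealizationDomain R w)) = divisorIdeal w f') :
    ClassGroup.mk0 I = ClassGroup.mk0 I' := by
  obtain ⟨v, hv⟩ := exists_isWeightedHomogeneous_X R w (-g)
  let J : (Ideal (RealizationDomain R w))⁰ :=
    ⟨divisorIdeal w (X v), mem_nonZeroDivisors_of_ne_zero (divisorIdeal_ne_bot (X_ne_zero v) hv)⟩
  have mk0_eq_inv {L : (Ideal (RealizationDomain R w))⁰} {h : MvPolynomial σ R} (h0 : h ≠ 0)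
      (hh : IsWeightedHomogeneous w h g)
      (hL : (L : Ideal (RealizationDomain R w)) = divisorIdeal w h) :
      ClassGroup.mk0 L = (ClassGroup.mk0 J)⁻¹ :=
    ClassGroup.mk0_eq_mk0_inv_iff.2
      (hL ▸ divisorIdeal_mul_eq_span_singleton h0 (X_ne_zero v) hh hv)
  rw [mk0_eq_inv hf0 hf hI, mk0_eq_inv hf0' hf' hI']

theorem weight_eq_zero_of_isPrincipal_divisorIdeal {f : MvPolynomial σ R} {g : G} (hf0 : f ≠ 0)
    (hf : IsWeightedHomogeneous w f g) (h : (divisorIdeal w f).IsPrincipal) : g = 0 := by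
  obtain ⟨⟨x, hx⟩⟩ := h
  obtain ⟨⟨a, s⟩, hxa⟩ := IsLocalization.surj (denominators R w) x
  have hspan : divisorIdeal w f = divisorIdeal w (a : MvPolynomial σ R) := by
    rw [divisorIdeal_coe, ← hxa, Ideal.span_singleton_mul_right_unit (IsLocalization.map_units _ s)]
    exact hx
  have ha0 : (a : MvPolynomial σ R) ≠ 0 := by
    intro ha
    refine divisorIdeal_ne_bot hf0 hf ?_
    rw [hspan, divisorIdeal_coe, Subtype.ext (a2 := (0 : weightZeroSubring R w)) ha, map_zero,
      Ideal.span_singleton_eq_bot]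
  exact weight_eq_of_divisorIdeal_eq hf0 ha0 hf a.2 hspan

variable (R w)

/-- The nonzero prime ideal `divisorIdeal w (X v)`, in the form expected by `ClassGroup.mk0`. -/
noncomputable def variableIdeal (v : σ) : (Ideal (RealizationDomain R w))⁰ :=
  ⟨divisorIdeal w (X v), mem_nonZeroDivisors_of_ne_zero <|
    divisorIdeal_ne_bot (X_ne_zero v) (isWeightedHomogeneous_X R w v)⟩

/-- The class of the ideals `divisorIdeal w h` with `h` homogeneous of weight `g`, as a function of
`g`; it is computed on an arbitrary variable of that weight. -/
noncomputable def classOfWeight (g : G) : ClassGroup (RealizationDomain R w) :=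
  ClassGroup.mk0 (variableIdeal R w (exists_notMem_weight_eq w ∅ g).choose)

variable {R w}

theorem mk0_eq_classOfWeight {I : (Ideal (RealizationDomain R w))⁰} {h : MvPolynomial σ R} {g : G}
    (h0 : h ≠ 0) (hh : IsWeightedHomogeneous w h g)
    (hI : (I : Ideal (RealizationDomain R w)) = divisorIdeal w h) :
    ClassGroup.mk0 I = classOfWeight R w g := by
  have hX := isWeightedHomogeneous_X R w (exists_notMem_weight_eq w ∅ g).choose
  rw [(exists_notMem_weight_eq w ∅ g).choose_spec.2] at hX
  exact mk0_eq_mk0_of_weight_eq h0 (X_ne_zero _) hh hX hI rfl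

theorem mk0_variableIdeal (v : σ) :
    ClassGroup.mk0 (variableIdeal R w v) = classOfWeight R w (w v) :=
  mk0_eq_classOfWeight (X_ne_zero v) (isWeightedHomogeneous_X R w v) rfl

theorem classOfWeight_add (a b : G) :
    classOfWeight R w (a + b) = classOfWeight R w a * classOfWeight R w b := by
  obtain ⟨x, -, rfl⟩ := exists_notMem_weight_eq w ∅ a
  obtain ⟨y, -, rfl⟩ := exists_notMem_weight_eq w ∅ b
  have hX := isWeightedHomogeneous_X R w
  rw [← mk0_variableIdeal x, ← mk0_variableIdeal y, ← map_mul]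
  exact (mk0_eq_classOfWeight (mul_ne_zero (X_ne_zero x) (X_ne_zero y)) ((hX x).mul (hX y))
    (divisorIdeal_mul (X_ne_zero x) (X_ne_zero y) (hX x) (hX y)).symm).symm

theorem weight_eq_zero_of_classOfWeight_eq_one {g : G} (hg : classOfWeight R w g = 1) : g = 0 := by
  obtain ⟨v, -, rfl⟩ := exists_notMem_weight_eq w ∅ g
  rw [← mk0_variableIdeal] at hg
  exact weight_eq_zero_of_isPrincipal_divisorIdeal (X_ne_zero v) (isWeightedHomogeneous_X R w v)
    ((ClassGroup.mk0_eq_one_iff (variableIdeal R w v).2).1 hg)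

theorem classOfWeight_surjective : Function.Surjective (classOfWeight R w) := by
  intro c
  obtain ⟨I, rfl⟩ := ClassGroup.mk0_surjective c
  obtain ⟨h, g, h0, hg, hI⟩ := exists_divisorIdeal_eq (nonZeroDivisors.coe_ne_zero I)
  exact ⟨g, (mk0_eq_classOfWeight h0 hg hI).symm⟩

variable (R w)

/-- The isomorphism sending the class of `divisorIdeal w h` to the weight of `h`. -/
noncomputable def classGroupEquivWeights : Additive (ClassGroup (RealizationDomain R w)) ≃+ G :=
  let φ : G →+ Additive (ClassGroup (RealizationDomain R w)) :=
    .mk' (fun g => .ofMul (classOfWeight R w g)) classOfWeight_add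
  .symm <| .ofBijective φ
    ⟨(injective_iff_map_eq_zero φ).2 fun _ => weight_eq_zero_of_classOfWeight_eq_one,
      classOfWeight_surjective⟩

variable {R w} in
theorem infinite_setOf_isPrime_mk0_eq (c : ClassGroup (RealizationDomain R w)) :
    {P : (Ideal (RealizationDomain R w))⁰ |
      (P : Ideal (RealizationDomain R w)).IsPrime ∧ ClassGroup.mk0 P = c}.Infinite := by
  obtain ⟨g, rfl⟩ := classOfWeight_surjective c
  refine Set.infinite_of_injective_forall_mem (f := fun v : w ⁻¹' {g} => variableIdeal R w v)
    (fun v v' h => Subtype.ext (divisorIdeal_X_injective R w (congrArg Subtype.val h))) ?_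
  rintro ⟨v, rfl⟩
  exact ⟨isPrime_divisorIdeal_X w v, mk0_variableIdeal v⟩

end ClassGroup

theorem dedekind_realization_of_countably_generated_bounded_general (G : Type u) [AddCommGroup G] :
    ∃ (D : Type u) (_ : CommRing D) (_ : IsDedekindDomain D),
      ¬ IsField D ∧
      Nonempty (Additive (ClassGroup D) ≃+ G) ∧
      ∀ g : ClassGroup D,
        { P : (Ideal D)⁰ | (P : Ideal D).IsPrime ∧ ClassGroup.mk0 P = g }.Infinite := by
  let w : G × ℕ → G := Prod.fst
  have (g : G) : Infinite (w ⁻¹' {g}) :=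
    .of_injective (fun n : ℕ => (⟨(g, n), rfl⟩ : w ⁻¹' {g}))
      fun _ _ h => congrArg (fun v => v.1.2) h
  exact ⟨RealizationDomain ℤ w, inferInstance, inferInstance, not_isField_realizationDomain ℤ w,
    ⟨classGroupEquivWeights ℤ w⟩, infinite_setOf_isPrime_mk0_eq⟩

/-- If `G` is a countably generated abelian group of finite exponent (equivalently, a direct
sum of a countable family of cyclic groups of bounded order), then there is a Dedekind
domain `D`, not a field, with `Cl(D) ≅ G` such that every class of `Cl(D)` contains
infinitely many nonzero prime ideals. -/
theorem dedekind_realization_of_countably_generated_bounded (G : Type) [AddCommGroup G]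
    (hcount : ∃ S : Set G, S.Countable ∧ AddSubgroup.closure S = ⊤)
    (hexp : ∃ n : ℕ, 1 ≤ n ∧ ∀ g : G, n • g = 0) :
    ∃ (D : Type) (_ : CommRing D) (_ : IsDedekindDomain D),
      ¬ IsField D ∧
      Nonempty (Additive (ClassGroup D) ≃+ G) ∧
      ∀ g : ClassGroup D,
        { P : (Ideal D)⁰ | (P : Ideal D).IsPrime ∧ ClassGroup.mk0 P = g }.Infinite :=
  dedekind_realization_of_countably_generated_bounded_general G
end

section
/- Let D be an integral domain with fraction field K, Q a prime ideal of D, M = D ∖ Q, and let J be a fractional s-ideal of M. Then (JD)⁻¹ = J⁻¹D, i.e., the set {x ∈ K | x·(JD) ⊆ D} equals the D-submodule of K generated by J⁻¹ = {x ∈ q(M) | xJ ⊆ M}. -/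
open scoped Pointwise

noncomputable section

variable (D : Type*) [CommRing D] [IsDomain D]

/-- The image in the fraction field `K` of the monoid `M = D \ Q`. -/
def monoidMK (Q : Ideal D) : Set (FractionRing D) :=
  {x | ∃ a : D, a ∉ Q ∧ x = algebraMap D (FractionRing D) a}

/-- The quotient group `q(M) = {a·b⁻¹ | a, b ∈ M} ⊆ K` of the monoid `M = D \ Q`. -/
def quotM (Q : Ideal D) : Set (FractionRing D) :=
  {x | ∃ a b : D, a ∉ Q ∧ b ∉ Q ∧
    x = algebraMap D (FractionRing D) a / algebraMap D (FractionRing D) b}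

/-- For a subset `X ⊆ q(M)`, the inverse `X⁻¹ = {x ∈ q(M) | x·X ⊆ M}`. -/
def invM (Q : Ideal D) (X : Set (FractionRing D)) : Set (FractionRing D) :=
  {x | x ∈ quotM D Q ∧ ∀ y ∈ X, x * y ∈ monoidMK D Q}

/-- `J` is a fractional s-ideal of the monoid `M = D \ Q`: a nonempty subset of `q(M)`
with `J·M = J` such that `c·J ⊆ M` for some `c ∈ M`. -/
def IsFracSIdeal (Q : Ideal D) (J : Set (FractionRing D)) : Prop :=
  J.Nonempty ∧ J ⊆ quotM D Q ∧ J * monoidMK D Q = J ∧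
    ∃ c ∈ monoidMK D Q, (c • J : Set (FractionRing D)) ⊆ monoidMK D Q

/-! The elements `x` of `(JD)⁻¹` for which `x·J` meets `M` are exactly the elements of `J⁻¹`, since
`M` is the trace of the group `q(M)` on `D`. If instead `x·J ⊆ Q`, then adding any `w ∈ J⁻¹` gives
`(x + w)·j ∈ Q + M ⊆ M`, and `x = (x + w) - w` is a difference of two elements of `J⁻¹`. -/

section SubmoduleQuotient

variable {R A : Type*} [CommSemiring R] [CommSemiring A] [Algebra R A]

theorem mem_div_span_iff {I : Submodule R A} {s : Set A} {x : A} :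
    x ∈ I / Submodule.span R s ↔ ∀ y ∈ s, x * y ∈ I :=
  Submodule.mem_div_iff_forall_mul_mem.trans
    (Submodule.span_le (p := I.comap (LinearMap.mulLeft R x)))

end SubmoduleQuotient

section ComplementOfIdeal

variable {R : Type*} [CommRing R] {Q : Ideal R} {x y : FractionRing R}

theorem algebraMap_ne_zero_of_notMem {a : R} (ha : a ∉ Q) :
    algebraMap R (FractionRing R) a ≠ 0 :=
  (map_ne_zero_iff _ (IsFractionRing.injective R _)).2 fun h => ha (h ▸ Q.zero_mem)

theorem mem_one_of_mem_monoidMK (hx : x ∈ monoidMK R Q) :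
    x ∈ (1 : Submodule R (FractionRing R)) := by
  obtain ⟨a, -, rfl⟩ := hx
  exact Submodule.algebraMap_mem a

theorem add_mem_monoidMK (hx : x ∈ (1 : Submodule R (FractionRing R))) (hxM : x ∉ monoidMK R Q)
    (hy : y ∈ monoidMK R Q) : x + y ∈ monoidMK R Q := by
  obtain ⟨a, rfl⟩ := Submodule.mem_one.1 hx
  obtain ⟨b, hb, rfl⟩ := hy
  have ha : a ∈ Q := by_contra fun ha => hxM ⟨a, ha, rfl⟩
  exact ⟨a + b, fun hab => hb ((Q.add_mem_iff_right ha).1 hab), (map_add _ a b).symm⟩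

end ComplementOfIdeal

section ComplementOfPrime

variable {D} {Q : Ideal D} {J : Set (FractionRing D)} {x y : FractionRing D}

theorem ne_zero_of_mem_quotM (hx : x ∈ quotM D Q) : x ≠ 0 := by
  obtain ⟨a, b, ha, hb, rfl⟩ := hx
  exact div_ne_zero (algebraMap_ne_zero_of_notMem ha) (algebraMap_ne_zero_of_notMem hb)

theorem mul_mem_quotM (hQ : Q.IsPrime) (hx : x ∈ quotM D Q) (hy : y ∈ quotM D Q) :
    x * y ∈ quotM D Q := by
  obtain ⟨a, b, ha, hb, rfl⟩ := hx
  obtain ⟨c, d, hc, hd, rfl⟩ := hy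
  exact ⟨a * c, b * d, hQ.mul_notMem ha hc, hQ.mul_notMem hb hd, by
    rw [map_mul, map_mul, div_mul_div_comm]⟩

theorem inv_mem_quotM (hx : x ∈ quotM D Q) : x⁻¹ ∈ quotM D Q := by
  obtain ⟨a, b, ha, hb, rfl⟩ := hx
  exact ⟨b, a, hb, ha, inv_div _ _⟩

theorem div_mem_quotM (hQ : Q.IsPrime) (hx : x ∈ quotM D Q) (hy : y ∈ quotM D Q) :
    x / y ∈ quotM D Q :=
  div_eq_mul_inv x y ▸ mul_mem_quotM hQ hx (inv_mem_quotM hy)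

theorem algebraMap_mem_quotM_iff (hQ : Q.IsPrime) {a : D} :
    algebraMap D (FractionRing D) a ∈ quotM D Q ↔ a ∉ Q := by
  refine ⟨?_, fun ha => ⟨a, 1, ha, hQ.one_notMem, by rw [map_one, div_one]⟩⟩
  rintro ⟨b, c, hb, hc, h⟩ ha
  rw [eq_div_iff (algebraMap_ne_zero_of_notMem hc), ← map_mul] at h
  exact hb (IsFractionRing.injective D _ h ▸ Q.mul_mem_right c ha)

theorem mem_monoidMK_iff (hQ : Q.IsPrime) :
    x ∈ monoidMK D Q ↔ x ∈ (1 : Submodule D (FractionRing D)) ∧ x ∈ quotM D Q := by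
  constructor
  · rintro ⟨a, ha, rfl⟩
    exact ⟨Submodule.algebraMap_mem a, (algebraMap_mem_quotM_iff hQ).2 ha⟩
  · rintro ⟨hx, hxq⟩
    obtain ⟨a, rfl⟩ := Submodule.mem_one.1 hx
    exact ⟨a, (algebraMap_mem_quotM_iff hQ).1 hxq, rfl⟩

theorem invM_subset_one_div_span :
    invM D Q J ⊆ ((1 : Submodule D (FractionRing D)) / Submodule.span D J :
      Submodule D (FractionRing D)) :=
  fun _ hx => mem_div_span_iff.2 fun y hy => mem_one_of_mem_monoidMK (hx.2 y hy)

theorem subset_quotM_of_nonempty_invM (hQ : Q.IsPrime) (hinv : (invM D Q J).Nonempty) :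
    J ⊆ quotM D Q := by
  obtain ⟨w, hw, hwJ⟩ := hinv
  intro y hy
  have hwy : w * y ∈ quotM D Q := ((mem_monoidMK_iff hQ).1 (hwJ y hy)).2
  rw [← mul_div_cancel_left₀ y (ne_zero_of_mem_quotM hw)]
  exact div_mem_quotM hQ hwy hw

theorem mem_invM_of_mul_mem_monoidMK (hQ : Q.IsPrime) (hJ : J ⊆ quotM D Q)
    (hx : x ∈ (1 : Submodule D (FractionRing D)) / Submodule.span D J)
    (hy : y ∈ J) (hxy : x * y ∈ monoidMK D Q) : x ∈ invM D Q J := by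
  have hxq : x ∈ quotM D Q := by
    rw [← mul_div_cancel_right₀ x (ne_zero_of_mem_quotM (hJ hy))]
    exact div_mem_quotM hQ ((mem_monoidMK_iff hQ).1 hxy).2 (hJ hy)
  exact ⟨hxq, fun z hz => (mem_monoidMK_iff hQ).2
    ⟨mem_div_span_iff.1 hx z hz, mul_mem_quotM hQ hxq (hJ hz)⟩⟩

theorem IsFracSIdeal.nonempty_invM (hQ : Q.IsPrime) (hJ : IsFracSIdeal D Q J) :
    (invM D Q J).Nonempty := by
  obtain ⟨-, -, -, c, hc, hcJ⟩ := hJ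
  exact ⟨c, ((mem_monoidMK_iff hQ).1 hc).2,
    fun _ hy => hcJ (Set.smul_mem_smul_set hy)⟩

theorem inv_span_eq_span_inv_general (hQ : Q.IsPrime) (hJ : J.Nonempty)
    (hinv : (invM D Q J).Nonempty) :
    (1 : Submodule D (FractionRing D)) / Submodule.span D J =
      Submodule.span D (invM D Q J) := by
  refine le_antisymm (fun x hx => ?_) (Submodule.span_le.2 invM_subset_one_div_span)
  have hJq : J ⊆ quotM D Q := subset_quotM_of_nonempty_invM hQ hinv
  obtain ⟨j, hj⟩ := hJ
  obtain ⟨w, hw⟩ := hinv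
  by_cases hxj : x * j ∈ monoidMK D Q
  · exact Submodule.subset_span (mem_invM_of_mul_mem_monoidMK hQ hJq hx hj hxj)
  · have hxwj : (x + w) * j ∈ monoidMK D Q := by
      rw [add_mul]
      exact add_mem_monoidMK (mem_div_span_iff.1 hx j hj) hxj (hw.2 j hj)
    have hxw : x + w ∈ invM D Q J :=
      mem_invM_of_mul_mem_monoidMK hQ hJq (add_mem hx (invM_subset_one_div_span hw)) hj hxwj
    rw [← add_sub_cancel_right x w]
    exact sub_mem (Submodule.subset_span hxw) (Submodule.subset_span hw)

end ComplementOfPrime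

/-- **Lemma 3.1(2).** Let `D` be a domain with fraction field `K`, `Q` a prime ideal of `D`,
`M = D \ Q`, and `J` a fractional s-ideal of `M`. Then `(JD)⁻¹ = J⁻¹D`: the set
`{x ∈ K | x·(JD) ⊆ D}` equals the `D`-submodule of `K` generated by
`J⁻¹ = {x ∈ q(M) | x·J ⊆ M}`. -/
theorem inv_span_eq_span_inv (Q : Ideal D) (hQ : Q.IsPrime)
    (J : Set (FractionRing D)) (hJ : IsFracSIdeal D Q J) :
    (1 : Submodule D (FractionRing D)) / Submodule.span D J =
      Submodule.span D (invM D Q J) :=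
  inv_span_eq_span_inv_general hQ hJ.1 (hJ.nonempty_invM hQ)

end
end

section
/- Let R be a Dedekind domain that is not a field such that Cl(R) is finite with |Cl(R)| ≥ 3 and every class of Cl(R) contains infinitely many nonzero prime ideals of R. Then there exists N ∈ ℕ such that for every nonzero nonunit a ∈ R there is some d ∈ Δ*(Cl(R)) for which the set of lengths L(a) is an almost arithmetic multiprogression (AAMP) with difference d and bound N. -/
open scoped nonZeroDivisors

/-- The set of lengths `L(a)` of `a`: the set of all `k` such that `a` is a product of `k`
irreducible elements. -/
def setOfLengths {R : Type*} [CommMonoid R] (a : R) : Set ℕ :=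
  {k | ∃ s : Multiset R, (∀ u ∈ s, Irreducible u) ∧ Multiset.card s = k ∧ s.prod = a}

/-- The set of distances `Δ(L)` of a set `L ⊆ ℤ`: all gaps between consecutive elements. -/
def setDistances (L : Set ℤ) : Set ℤ :=
  {d | ∃ x ∈ L, ∃ y ∈ L, x < y ∧ y - x = d ∧ ∀ z ∈ L, ¬(x < z ∧ z < y)}

/-- A multiset over `G₀ ⊆ G` is a zero-sum sequence if its product (written
multiplicatively) is trivial. -/
def IsZeroSumSeq {G : Type*} [CommGroup G] (G₀ : Set G) (s : Multiset G) : Prop :=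
  (∀ g ∈ s, g ∈ G₀) ∧ s.prod = 1

/-- An element of `B(G₀)` is irreducible (an atom) if it is nonempty and is not the union
of two nonempty zero-sum sequences. -/
def IsZeroSumAtom {G : Type*} [CommGroup G] (G₀ : Set G) (s : Multiset G) : Prop :=
  IsZeroSumSeq G₀ s ∧ s ≠ 0 ∧
    ∀ t u : Multiset G, IsZeroSumSeq G₀ t → IsZeroSumSeq G₀ u → t ≠ 0 → u ≠ 0 → s ≠ t + u

/-- The set of lengths of a zero-sum sequence `s` in `B(G₀)`: the number of atoms in
factorizations of `s` into atoms of `B(G₀)`. -/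
def zsSetOfLengths {G : Type*} [CommGroup G] (G₀ : Set G) (s : Multiset G) : Set ℕ :=
  {k | ∃ f : Multiset (Multiset G), Multiset.card f = k ∧
    (∀ t ∈ f, IsZeroSumAtom G₀ t) ∧ f.sum = s}

/-- The set of distances `Δ(B(G₀))` of the monoid of zero-sum sequences over `G₀`. -/
def zsDelta {G : Type*} [CommGroup G] (G₀ : Set G) : Set ℤ :=
  ⋃ s ∈ {s : Multiset G | IsZeroSumSeq G₀ s},
    setDistances ((fun k : ℕ => (k : ℤ)) '' zsSetOfLengths G₀ s)

/-- The set of minimal distances `Δ*(G) = {min Δ(B(G₀)) | G₀ ⊆ G, Δ(B(G₀)) ≠ ∅}`. -/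
def deltaStar (G : Type*) [CommGroup G] : Set ℤ :=
  {d | ∃ G₀ : Set G, IsLeast (zsDelta G₀) d}

/-- `L` is an almost arithmetic multiprogression (AAMP) with difference `d` and bound `N`:
`L = y + (L' ∪ L* ∪ L'') ⊆ y + 𝒟 + dℤ` where `{0, d} ⊆ 𝒟 ⊆ [0, d]`, `min L* = 0`,
`L* = (𝒟 + dℤ) ∩ [0, max L*]`, `L' ⊆ [-N, -1]` and `L'' ⊆ max L* + [1, N]`. -/
def IsAAMP (L : Set ℤ) (d : ℤ) (N : ℕ) : Prop :=
  ∃ (y : ℤ) (𝒟 L' Lstar L'' : Set ℤ) (m : ℤ),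
    {0, d} ⊆ 𝒟 ∧ 𝒟 ⊆ Set.Icc 0 d ∧
    L = (fun x => y + x) '' (L' ∪ Lstar ∪ L'') ∧
    L' ∪ Lstar ∪ L'' ⊆ {x | ∃ a ∈ 𝒟, ∃ k : ℤ, x = a + d * k} ∧
    IsLeast Lstar 0 ∧ IsGreatest Lstar m ∧
    Lstar = {x | (∃ a ∈ 𝒟, ∃ k : ℤ, x = a + d * k) ∧ 0 ≤ x ∧ x ≤ m} ∧
    L' ⊆ Set.Icc (-(N : ℤ)) (-1) ∧
    L'' ⊆ Set.Icc (m + 1) (m + N)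

/-!
The block homomorphism sends `a` to the multiset of classes of the prime ideals dividing `(a)`. It
preserves and reflects factorizations, so `L(a)` is a set of lengths of a zero-sum sequence over
the finite group `G = Cl(R)`.

The atoms of `B(G)` have bounded cardinality. Hence splitting off boundedly many terms of a zero-sum
sequence moves its lengths by a bounded amount, and sets of lengths have bounded gaps. Let
`G₀ ⊆ G` contain all but at most `K` terms of `s`, and suppose that each `g ∈ G₀` occurs often in
`s`. If all lengths over `G₀` are unique, then `L(s)` has bounded diameter and is an AAMP with
difference `1 ∈ Δ*(G)`. Otherwise `s` contains many copies of a zero-sum sequence `t` over `G₀`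
with two lengths at distance `d = min Δ(B(G₀))`. Exchanging the two factorizations of the copies of
`t` one at a time gives a progression with difference `d` that is longer than the gaps, so away from
its ends `L(s)` contains every integer congruent modulo `d` to one of its elements. If some `g ∈ G₀`
occurs rarely, remove it from `G₀` and increase `K`. By induction every `s` is reached from
`G₀ = G`, `K = 0`.
-/

open Multiset

section ZeroSum

variable {G : Type*} [CommGroup G] {G₀ G₁ : Set G} {s t u : Multiset G} {k l : ℕ}

lemma IsZeroSumSeq.add (hs : IsZeroSumSeq G₀ s) (ht : IsZeroSumSeq G₀ t) :
    IsZeroSumSeq G₀ (s + t) :=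
  ⟨fun g hg => (mem_add.1 hg).elim (hs.1 g) (ht.1 g), by rw [prod_add, hs.2, ht.2, one_mul]⟩

lemma IsZeroSumSeq.of_add_left (hst : IsZeroSumSeq G₀ (s + t)) (hs : s.prod = 1) :
    IsZeroSumSeq G₀ t :=
  ⟨fun g hg => hst.1 g (mem_add.2 (.inr hg)), by simpa [prod_add, hs] using hst.2⟩

lemma isZeroSumAtom_iff_minimal :
    IsZeroSumAtom G₀ s ↔ Minimal (fun t => IsZeroSumSeq G₀ t ∧ t ≠ 0) s := by
  rw [minimal_iff, IsZeroSumAtom, and_assoc]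
  refine and_congr_right fun hs => and_congr_right fun _ => ⟨fun h t ht hle => ?_, ?_⟩
  · obtain ⟨u, rfl⟩ := Multiset.le_iff_exists_add.1 hle
    by_contra hne
    exact h t u ht.1 (hs.of_add_left ht.1.2) ht.2 (by rintro rfl; simp at hne) rfl
  · rintro h t u ht - ht0 hu0 rfl
    exact hu0 (add_eq_left.1 (h ⟨ht, ht0⟩ (Multiset.le_add_right t u)))

lemma IsZeroSumAtom.card_pos (hs : IsZeroSumAtom G₀ s) : 0 < card s :=
  Multiset.card_pos.2 hs.2.1

lemma IsZeroSumAtom.of_forall_mem (hs : IsZeroSumAtom G₀ s) (hG₁ : ∀ g ∈ s, g ∈ G₁) :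
    IsZeroSumAtom G₁ s := by
  refine ⟨⟨hG₁, hs.1.2⟩, hs.2.1, fun t u ht hu ht0 hu0 hadd => ?_⟩
  subst hadd
  exact hs.2.2 t u ⟨fun g hg => hs.1.1 g (mem_add.2 (.inl hg)), ht.2⟩
    ⟨fun g hg => hs.1.1 g (mem_add.2 (.inr hg)), hu.2⟩ ht0 hu0 rfl

lemma IsZeroSumAtom.count_le_orderOf [DecidableEq G] {g : G} (hs : IsZeroSumAtom G₀ s)
    (hg : IsOfFinOrder g) : count g s ≤ orderOf g := by
  by_contra! hlt
  have hle : replicate (orderOf g) g ≤ s := le_count_iff_replicate_le.1 hlt.le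
  have hzero : IsZeroSumSeq G₀ (replicate (orderOf g) g) :=
    ⟨fun x hx => hs.1.1 x (mem_of_le hle hx), by rw [prod_replicate, pow_orderOf_eq_one]⟩
  have hne : replicate (orderOf g) g ≠ 0 := by
    simpa [← Multiset.card_pos] using hg.orderOf_pos
  have heq := (minimal_iff.1 (isZeroSumAtom_iff_minimal.1 hs)).2 ⟨hzero, hne⟩ hle
  rw [heq, count_replicate_self] at hlt
  exact hlt.false

lemma IsZeroSumAtom.card_le_sum_orderOf [Fintype G] (hs : IsZeroSumAtom G₀ s) :
    card s ≤ ∑ g : G, orderOf g := by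
  classical
  rw [← sum_count_eq_card (s := Finset.univ) fun g _ => Finset.mem_univ g]
  exact Finset.sum_le_sum fun g _ => hs.count_le_orderOf (isOfFinOrder_of_finite g)

lemma isZeroSumAtom_of_card_le_three (hs : IsZeroSumSeq G₀ s) (h0 : s ≠ 0) (h1 : (1 : G) ∉ s)
    (hcard : card s ≤ 3) : IsZeroSumAtom G₀ s := by
  have card_ne_one {v : Multiset G} (hv : v ≤ s) (hv1 : v.prod = 1) : card v ≠ 1 := by
    intro hv'
    obtain ⟨x, rfl⟩ := card_eq_one.1 hv'
    rw [prod_singleton] at hv1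
    exact h1 (hv1 ▸ mem_of_le hv (mem_singleton_self x))
  refine ⟨hs, h0, fun t u ht hu ht0 hu0 hadd => ?_⟩
  have ht' := card_ne_one (hadd ▸ Multiset.le_add_right t u) ht.2
  have hu' := card_ne_one (hadd ▸ Multiset.le_add_left u t) hu.2
  rw [← Multiset.card_pos] at ht0 hu0
  rw [hadd, card_add] at hcard
  omega

lemma zero_mem_zsSetOfLengths : 0 ∈ zsSetOfLengths G₀ s ↔ s = 0 := by
  simp [zsSetOfLengths, eq_comm]

lemma succ_mem_zsSetOfLengths :
    k + 1 ∈ zsSetOfLengths G₀ s ↔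
      ∃ u t, IsZeroSumAtom G₀ u ∧ k ∈ zsSetOfLengths G₀ t ∧ s = u + t := by
  constructor
  · rintro ⟨f, hcard, hf, rfl⟩
    obtain ⟨u, hu⟩ := card_pos_iff_exists_mem.1 (by omega : 0 < card f)
    obtain ⟨f, rfl⟩ := exists_cons_of_mem hu
    exact ⟨u, f.sum, hf u hu,
      ⟨f, by simpa using hcard, fun v hv => hf v (mem_cons_of_mem hv), rfl⟩, sum_cons u f⟩
  · rintro ⟨u, _, hu, ⟨f, rfl, hf, rfl⟩, rfl⟩
    exact ⟨u ::ₘ f, card_cons u f, forall_mem_cons.2 ⟨hu, hf⟩, sum_cons u f⟩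

lemma one_mem_zsSetOfLengths : 1 ∈ zsSetOfLengths G₀ s ↔ IsZeroSumAtom G₀ s := by
  simp [succ_mem_zsSetOfLengths (k := 0), zero_mem_zsSetOfLengths]

lemma add_mem_zsSetOfLengths (hk : k ∈ zsSetOfLengths G₀ s) (hl : l ∈ zsSetOfLengths G₀ t) :
    k + l ∈ zsSetOfLengths G₀ (s + t) := by
  obtain ⟨f, rfl, hf, rfl⟩ := hk
  obtain ⟨f', rfl, hf', rfl⟩ := hl
  exact ⟨f + f', card_add f f', fun v hv => (mem_add.1 hv).elim (hf v) (hf' v), sum_add f f'⟩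

lemma isZeroSumSeq_of_mem_zsSetOfLengths (hk : k ∈ zsSetOfLengths G₀ s) : IsZeroSumSeq G₀ s := by
  induction k generalizing s with
  | zero => simp [zero_mem_zsSetOfLengths.1 hk, IsZeroSumSeq]
  | succ k ih =>
    obtain ⟨u, t, hu, ht, rfl⟩ := succ_mem_zsSetOfLengths.1 hk
    exact hu.1.add (ih ht)

lemma le_card_of_mem_zsSetOfLengths (hk : k ∈ zsSetOfLengths G₀ s) : k ≤ card s := by
  induction k generalizing s with
  | zero => exact Nat.zero_le _
  | succ k ih =>
    obtain ⟨u, t, hu, ht, rfl⟩ := succ_mem_zsSetOfLengths.1 hk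
    rw [card_add, add_comm]
    exact add_le_add hu.card_pos (ih ht)

lemma card_le_mul_of_mem_zsSetOfLengths {D : ℕ} (hD : ∀ u, IsZeroSumAtom G₀ u → card u ≤ D)
    (hk : k ∈ zsSetOfLengths G₀ s) : card s ≤ D * k := by
  induction k generalizing s with
  | zero => simp [zero_mem_zsSetOfLengths.1 hk]
  | succ k ih =>
    obtain ⟨u, t, hu, ht, rfl⟩ := succ_mem_zsSetOfLengths.1 hk
    rw [card_add, Nat.mul_succ, add_comm]
    exact add_le_add (ih ht) (hD u hu)

lemma IsZeroSumSeq.zsSetOfLengths_nonempty (hs : IsZeroSumSeq G₀ s) :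
    (zsSetOfLengths G₀ s).Nonempty := by
  induction s using Multiset.strongInductionOn with | _ s ih
  by_cases h0 : s = 0
  · exact ⟨0, zero_mem_zsSetOfLengths.2 h0⟩
  obtain ⟨u, hus, hu⟩ :=
    exists_minimal_le_of_wellFoundedLT (fun u => IsZeroSumSeq G₀ u ∧ u ≠ 0) s ⟨hs, h0⟩
  rw [← isZeroSumAtom_iff_minimal] at hu
  obtain ⟨t, rfl⟩ := Multiset.le_iff_exists_add.1 hus
  have hlt : t < u + t := lt_add_of_pos_left t (pos_iff_ne_zero.2 hu.2.1)
  obtain ⟨k, hk⟩ := ih t hlt (hs.of_add_left hu.1.2)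
  exact ⟨k + 1, succ_mem_zsSetOfLengths.2 ⟨u, t, hu, hk, rfl⟩⟩

lemma finite_zsSetOfLengths (G₀ : Set G) (s : Multiset G) : (zsSetOfLengths G₀ s).Finite :=
  (Set.finite_Iic (card s)).subset fun _ => le_card_of_mem_zsSetOfLengths

lemma zsSetOfLengths_subset (hG₁ : ∀ g ∈ s, g ∈ G₁) :
    zsSetOfLengths G₀ s ⊆ zsSetOfLengths G₁ s := by
  intro k hk
  induction k generalizing s with
  | zero => exact zero_mem_zsSetOfLengths.2 (zero_mem_zsSetOfLengths.1 hk)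
  | succ k ih =>
    obtain ⟨u, t, hu, ht, rfl⟩ := succ_mem_zsSetOfLengths.1 hk
    exact succ_mem_zsSetOfLengths.2 ⟨u, t, hu.of_forall_mem fun g hg => hG₁ g (mem_add.2 (.inl hg)),
      ih (fun g hg => hG₁ g (mem_add.2 (.inr hg))) ht, rfl⟩

lemma nsmul_mem_zsSetOfLengths {m d : ℕ} (hm : m ∈ zsSetOfLengths G₀ s)
    (hmd : m + d ∈ zsSetOfLengths G₀ s) {q j : ℕ} (hj : j ≤ q) :
    q * m + j * d ∈ zsSetOfLengths G₀ (q • s) := by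
  induction q generalizing j with
  | zero => simp [zero_mem_zsSetOfLengths, Nat.le_zero.1 hj]
  | succ q ih =>
    rw [succ_nsmul]
    rcases hj.lt_or_eq with hj | rfl
    · convert add_mem_zsSetOfLengths (ih (Nat.le_of_lt_succ hj)) hm using 1
      ring
    · convert add_mem_zsSetOfLengths (ih le_rfl) hmd using 1
      ring

lemma exists_split_of_mem_zsSetOfLengths (hk : k ∈ zsSetOfLengths G₀ s) (ht : t ≤ s) :
    ∃ v w, s = v + w ∧ t ≤ v ∧
      ∃ i ∈ zsSetOfLengths G₀ v, ∃ j ∈ zsSetOfLengths G₀ w, i + j = k ∧ i ≤ card t := by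
  classical
  induction k generalizing s t with
  | zero =>
    obtain rfl := zero_mem_zsSetOfLengths.1 hk
    exact ⟨0, 0, (add_zero 0).symm, ht, 0, hk, 0, hk, rfl, Nat.zero_le _⟩
  | succ k ih =>
    obtain ⟨u, s, hu, hs, rfl⟩ := succ_mem_zsSetOfLengths.1 hk
    by_cases hts : t ≤ s
    · obtain ⟨v, w, rfl, htv, i, hi, j, hj, rfl, hit⟩ := ih hs hts
      exact ⟨v, u + w, add_left_comm u v w, htv, i, hi, j + 1,
        succ_mem_zsSetOfLengths.2 ⟨u, w, hu, hj, rfl⟩, rfl, hit⟩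
    · obtain ⟨v, w, rfl, htv, i, hi, j, hj, rfl, hit⟩ := ih hs (tsub_le_iff_left.2 ht)
      have hlt : card (t - u) < card t :=
        card_lt_card (tsub_le_self.lt_of_ne fun h => hts (h ▸ tsub_le_iff_left.2 ht))
      exact ⟨u + v, w, (add_assoc u v w).symm, tsub_le_iff_left.1 htv, i + 1,
        succ_mem_zsSetOfLengths.2 ⟨u, v, hu, hi, rfl⟩, j, hj, by omega, by omega⟩

lemma exists_mem_zsSetOfLengths_right_near {D : ℕ} (hD : ∀ u, IsZeroSumAtom G₀ u → card u ≤ D)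
    (hk : k ∈ zsSetOfLengths G₀ (s + t)) (ht : IsZeroSumSeq G₀ t) :
    ∃ l ∈ zsSetOfLengths G₀ t, k ≤ l + card s ∧ l ≤ k + D * card s := by
  obtain ⟨v, w, hvw, hsv, i, hi, j, hj, rfl, his⟩ :=
    exists_split_of_mem_zsSetOfLengths hk (Multiset.le_add_right s t)
  obtain ⟨r, rfl⟩ := Multiset.le_iff_exists_add.1 hsv
  obtain rfl : t = r + w := add_left_cancel (hvw.trans (add_assoc s r w))
  have hr : IsZeroSumSeq G₀ r :=
    (add_comm r w ▸ ht).of_add_left (isZeroSumSeq_of_mem_zsSetOfLengths hj).2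
  obtain ⟨n, hn⟩ := hr.zsSetOfLengths_nonempty
  have hnD : n ≤ D * card s := calc
    n ≤ card r := le_card_of_mem_zsSetOfLengths hn
    _ ≤ card (s + r) := card_le_card (Multiset.le_add_left r s)
    _ ≤ D * i := card_le_mul_of_mem_zsSetOfLengths hD hi
    _ ≤ D * card s := Nat.mul_le_mul_left D his
  exact ⟨n + j, add_mem_zsSetOfLengths hn hj, by omega, by omega⟩

lemma exists_mem_zsSetOfLengths_gap_le {D : ℕ} (hD : ∀ u, IsZeroSumAtom G₀ u → card u ≤ D)
    {p : ℕ} (hk : k ∈ zsSetOfLengths G₀ s) (hl : l ∈ zsSetOfLengths G₀ s) (hkp : k ≤ p)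
    (hpl : p < l) : ∃ c ∈ zsSetOfLengths G₀ s, p < c ∧ c ≤ p + (D * D + 1) := by
  induction l generalizing s p k with
  | zero => exact absurd hpl (Nat.not_lt_zero p)
  | succ l ih =>
    obtain ⟨u, t, hu, ht, rfl⟩ := succ_mem_zsSetOfLengths.1 hl
    obtain ⟨n, hn, -, hnk⟩ :=
      exists_mem_zsSetOfLengths_right_near hD hk (isZeroSumSeq_of_mem_zsSetOfLengths ht)
    have hnD : n ≤ k + D * D := hnk.trans (by gcongr; exact hD u hu)
    rcases lt_or_ge p (n + 1) with hpn | hpn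
    · exact ⟨n + 1, succ_mem_zsSetOfLengths.2 ⟨u, t, hu, hn, rfl⟩, hpn, by omega⟩
    · obtain ⟨c, hc, hpc, hcp⟩ := ih (p := p - 1) hn ht (by omega) (by omega)
      exact ⟨c + 1, succ_mem_zsSetOfLengths.2 ⟨u, t, hu, hc, rfl⟩, by omega, by omega⟩

end ZeroSum


section MinimalDistance

variable {G : Type*} [CommGroup G] {G₀ : Set G}

/-- The group generated by `Δ(B(G₀))`, realised as the set of all differences of two lengths of a
common zero-sum sequence over `G₀`. Its positive generator is `min Δ(B(G₀))`. -/
def lengthDifferences (G₀ : Set G) : AddSubgroup ℤ where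
  carrier := {n | ∃ s, ∃ k ∈ zsSetOfLengths G₀ s, ∃ l ∈ zsSetOfLengths G₀ s, (k - l : ℤ) = n}
  zero_mem' :=
    ⟨0, 0, zero_mem_zsSetOfLengths.2 rfl, 0, zero_mem_zsSetOfLengths.2 rfl, sub_self _⟩
  add_mem' := by
    rintro _ _ ⟨s, k, hk, l, hl, rfl⟩ ⟨s', k', hk', l', hl', rfl⟩
    exact ⟨s + s', k + k', add_mem_zsSetOfLengths hk hk', l + l', add_mem_zsSetOfLengths hl hl',
      by push_cast; ring⟩
  neg_mem' := by
    rintro _ ⟨s, k, hk, l, hl, rfl⟩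
    exact ⟨s, l, hl, k, hk, (neg_sub _ _).symm⟩

lemma isLeast_zsDelta {d : ℤ} (hd : IsLeast {n | n ∈ lengthDifferences G₀ ∧ 0 < n} d) :
    IsLeast (zsDelta G₀) d := by
  obtain ⟨⟨⟨s, k, hk, l, hl, rfl⟩, hpos⟩, hmin⟩ := hd
  simp only [zsDelta, setDistances]
  refine ⟨Set.mem_biUnion (isZeroSumSeq_of_mem_zsSetOfLengths hk) ?_, ?_⟩
  · refine ⟨l, ⟨l, hl, rfl⟩, k, ⟨k, hk, rfl⟩, sub_pos.1 hpos, rfl, ?_⟩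
    rintro _ ⟨c, hc, rfl⟩ ⟨hlc, hck⟩
    have := hmin ⟨⟨s, c, hc, l, hl, rfl⟩, sub_pos.2 hlc⟩
    dsimp only at hck
    omega
  · intro e he
    obtain ⟨t, -, _, ⟨x, hx, rfl⟩, _, ⟨y, hy, rfl⟩, hxy, rfl, -⟩ := Set.mem_iUnion₂.1 he
    exact hmin ⟨⟨t, y, hy, x, hx, rfl⟩, sub_pos.2 hxy⟩

lemma exists_isLeast_pos_lengthDifferences (h : lengthDifferences G₀ ≠ ⊥) :
    ∃ d : ℕ, IsLeast {n | n ∈ lengthDifferences G₀ ∧ 0 < n} (d : ℤ) := by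
  have hdisj : Disjoint (lengthDifferences G₀ : Set ℤ) (Set.Ioo 0 1) :=
    Set.disjoint_right.2 fun n hn _ => by have := hn.1; have := hn.2; omega
  obtain ⟨d, hd⟩ := AddSubgroup.exists_isLeast_pos h one_pos hdisj
  lift d to ℕ using hd.1.2.le
  exact ⟨d, hd⟩

lemma modEq_of_mem_zsSetOfLengths {s : Multiset G} {d k l : ℕ}
    (hd : IsLeast {n | n ∈ lengthDifferences G₀ ∧ 0 < n} (d : ℤ))
    (hk : k ∈ zsSetOfLengths G₀ s) (hl : l ∈ zsSetOfLengths G₀ s) : k ≡ l [MOD d] := by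
  have hmem : (l - k : ℤ) ∈ lengthDifferences G₀ := ⟨s, l, hl, k, hk, rfl⟩
  rwa [AddSubgroup.cyclic_of_min hd, ← AddSubgroup.zmultiples_eq_closure,
    Int.mem_zmultiples_iff, ← Nat.modEq_iff_dvd] at hmem

lemma one_mem_lengthDifferences_univ {a b : G} (ha : a ≠ 1) (hb : b ≠ 1) (hab : a * b ≠ 1) :
    1 ∈ lengthDifferences (Set.univ : Set G) := by
  have atom {s : Multiset G} (hs : s.prod = 1) (h0 : s ≠ 0) (h1 : (1 : G) ∉ s)
      (hcard : card s ≤ 3) : 1 ∈ zsSetOfLengths Set.univ s :=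
    one_mem_zsSetOfLengths.2 (isZeroSumAtom_of_card_le_three ⟨fun _ _ => trivial, hs⟩ h0 h1 hcard)
  have pair {g : G} (hg : g ≠ 1) : 1 ∈ zsSetOfLengths Set.univ ({g, g⁻¹} : Multiset G) :=
    atom (by simp) (by simp) (by simpa [eq_comm] using hg) (by simp)
  have triple {g h : G} (hg : g ≠ 1) (hh : h ≠ 1) (hgh : g * h ≠ 1) :
      1 ∈ zsSetOfLengths Set.univ ({g, h, (g * h)⁻¹} : Multiset G) :=
    atom (by simp [← mul_assoc]) (by simp)
      (by simpa [hg.symm, hh.symm] using (inv_ne_one.2 hgh).symm) (by simp)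
  have hthree := add_mem_zsSetOfLengths (add_mem_zsSetOfLengths (pair ha) (pair hb)) (pair hab)
  have htwo := add_mem_zsSetOfLengths (triple ha hb hab)
    (triple (inv_ne_one.2 ha) (inv_ne_one.2 hb) (by rwa [← mul_inv, inv_ne_one]))
  have heq : ({a, b, (a * b)⁻¹} + {a⁻¹, b⁻¹, (a⁻¹ * b⁻¹)⁻¹} : Multiset G) =
      {a, a⁻¹} + {b, b⁻¹} + {a * b, (a * b)⁻¹} := by
    rw [← mul_inv, inv_inv]
    simp only [insert_eq_cons, ← singleton_add]
    abel
  exact ⟨_, _, hthree, _, heq ▸ htwo, rfl⟩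

lemma one_mem_deltaStar_of_three_le_card (hG : 3 ≤ Nat.card G) : 1 ∈ deltaStar G := by
  have : Finite G := Nat.finite_of_card_ne_zero (by omega)
  have : Fintype G := Fintype.ofFinite G
  have : Nontrivial G := Finite.one_lt_card_iff_nontrivial.1 (by omega)
  classical
  obtain ⟨a, ha⟩ := exists_ne (1 : G)
  obtain ⟨b, -, hb⟩ : ∃ b ∈ (Finset.univ : Finset G), b ∉ ({1, a⁻¹} : Finset G) :=
    Finset.exists_mem_notMem_of_card_lt_card <| Finset.card_le_two.trans_lt <| by
      rw [Finset.card_univ, ← Nat.card_eq_fintype_card]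
      exact hG
  simp only [Finset.mem_insert, Finset.mem_singleton, not_or] at hb
  have hab : a * b ≠ 1 := fun h => hb.2 (eq_inv_of_mul_eq_one_right h)
  exact ⟨Set.univ, isLeast_zsDelta ⟨⟨one_mem_lengthDifferences_univ ha hb.1 hab, one_pos⟩,
    fun n hn => Int.add_one_le_iff.2 hn.2⟩⟩

end MinimalDistance

section AAMP

variable {L : Set ℤ} {d : ℤ} {M N : ℕ}

lemma IsAAMP.mono (hL : IsAAMP L d M) (hMN : M ≤ N) : IsAAMP L d N := by
  obtain ⟨y, 𝒟, L', Lstar, L'', m, h1, h2, h3, h4, h5, h6, h7, hL', hL''⟩ := hL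
  exact ⟨y, 𝒟, L', Lstar, L'', m, h1, h2, h3, h4, h5, h6, h7,
    hL'.trans (Set.Icc_subset_Icc (by omega) le_rfl),
    hL''.trans (Set.Icc_subset_Icc le_rfl (by omega))⟩

/-- The period `𝒟` of the AAMP built from `L` with base point `y` and difference `d`: the
residues of `L - y` modulo `d`, where both `0` and `d` represent the class of `0`. -/
def periodSet (L : Set ℤ) (d y : ℤ) : Set ℤ :=
  {r ∈ Set.Icc 0 d | ∃ l ∈ L, y + r ≡ l [ZMOD d]}

lemma exists_mem_periodSet_iff {x y : ℤ} (hd : 0 < d) :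
    (∃ r ∈ periodSet L d y, ∃ k : ℤ, x = r + d * k) ↔ ∃ l ∈ L, y + x ≡ l [ZMOD d] := by
  constructor
  · rintro ⟨r, ⟨-, l, hl, hrl⟩, k, rfl⟩
    exact ⟨l, hl, by simpa [← add_assoc] using hrl⟩
  · rintro ⟨l, hl, hxl⟩
    exact ⟨x % d, ⟨⟨Int.emod_nonneg x hd.ne', (Int.emod_lt_of_pos x hd).le⟩, l, hl,
      ((Int.mod_modEq x d).add_left y).trans hxl⟩, x / d, (Int.emod_add_mul_ediv x d).symm⟩

lemma isAAMP_of_forall_modEq {y m : ℤ} (hd : 0 < d) (hy : y ∈ L) (hm : 0 ≤ m) (hdm : d ∣ m)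
    (hL : L ⊆ Set.Icc (y - N) (y + m + N))
    (hmid : ∀ l₀ ∈ L, ∀ l ∈ Set.Icc y (y + m), l ≡ l₀ [ZMOD d] → l ∈ L) : IsAAMP L d N := by
  have mem_star {x : ℤ} (hx : 0 ≤ x ∧ x ≤ m) :
      (∃ r ∈ periodSet L d y, ∃ k : ℤ, x = r + d * k) ↔ y + x ∈ L := by
    refine (exists_mem_periodSet_iff hd).trans ⟨fun ⟨l, hl, hxl⟩ => ?_, fun hx => ⟨_, hx, rfl⟩⟩
    exact hmid l hl _ ⟨by omega, by omega⟩ hxl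
  have hym : y + m ∈ L :=
    hmid y hy _ ⟨by omega, le_rfl⟩ (by simpa using (Int.modEq_zero_iff_dvd.2 hdm).add_left y)
  refine ⟨y, periodSet L d y, {x | y + x ∈ L ∧ x < 0}, {x | y + x ∈ L ∧ 0 ≤ x ∧ x ≤ m},
    {x | y + x ∈ L ∧ m < x}, m, ?_, fun r hr => hr.1, ?_, ?_,
    ⟨⟨by simpa, le_rfl, hm⟩, fun x hx => hx.2.1⟩, ⟨⟨hym, hm, le_rfl⟩, fun x hx => hx.2.2⟩,
    Set.ext fun x => (and_congr_left mem_star).symm, ?_, ?_⟩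
  · rintro _ (rfl | rfl)
    · exact ⟨⟨le_rfl, hd.le⟩, y, hy, by simp⟩
    · exact ⟨⟨hd.le, le_rfl⟩, y, hy, by simp⟩
  · refine Set.Subset.antisymm (fun l hl => ⟨l - y, ?_, add_sub_cancel y l⟩) ?_
    · have hl' : y + (l - y) ∈ L := by rwa [add_sub_cancel]
      rcases lt_or_ge (l - y) 0 with h0 | h0
      · exact .inl (.inl ⟨hl', h0⟩)
      · exact (le_or_gt (l - y) m).imp (fun h => .inr ⟨hl', h0, h⟩) fun h => ⟨hl', h⟩
    · rintro _ ⟨x, (⟨hx, -⟩ | ⟨hx, -⟩) | ⟨hx, -⟩, rfl⟩ <;> exact hx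
  · rintro x ((⟨hx, -⟩ | ⟨hx, -⟩) | ⟨hx, -⟩) <;> exact (exists_mem_periodSet_iff hd).2 ⟨_, hx, rfl⟩
  · rintro x ⟨hx, hx0⟩
    have := (hL hx).1
    exact ⟨by omega, by omega⟩
  · rintro x ⟨hx, hmx⟩
    have := (hL hx).2
    exact ⟨by omega, by omega⟩

lemma isAAMP_of_subset_Icc {y : ℤ} (hd : 0 < d) (hy : y ∈ L) (hL : L ⊆ Set.Icc y (y + N)) :
    IsAAMP L d N := by
  refine isAAMP_of_forall_modEq hd hy le_rfl (dvd_zero d) (fun l hl => ?_) fun _ _ l hl _ => ?_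
  · have := hL hl
    exact ⟨by have := this.1; omega, by have := this.2; omega⟩
  · obtain rfl : l = y := le_antisymm (hl.2.trans (add_zero y).le) hl.1
    exact hy

lemma isAAMP_of_forall_interior {a b : ℤ} {c d : ℕ} (hd : 0 < d) (ha : IsLeast L a)
    (hb : IsGreatest L b)
    (hmid : ∀ l₀ ∈ L, ∀ l, a + c ≤ l → l ≤ b - c → l ≡ l₀ [ZMOD d] → l ∈ L) :
    IsAAMP L d (2 * c + d) := by
  have hd' : (0 : ℤ) < d := Int.natCast_pos.2 hd
  rcases lt_or_ge (b - a) (2 * c + d) with hshort | hlong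
  · refine isAAMP_of_subset_Icc hd' ha.1 fun l hl => ⟨ha.2 hl, ?_⟩
    have := hb.2 hl
    push_cast
    omega
  set y : ℤ := a + d * (c / d + 1)
  set m : ℤ := d * ((b - c - y) / d)
  have hcy : a + c < y := by
    have := Int.lt_mul_ediv_self_add (x := c) hd'
    grind
  have hyc : y ≤ a + c + d := by
    have := Int.mul_ediv_self_le (x := c) hd'.ne'
    grind
  have hm : m ≤ b - c - y := Int.mul_ediv_self_le hd'.ne'
  have hm' : b - c - y < m + d := Int.lt_mul_ediv_self_add hd'
  have hm0 : 0 ≤ m := mul_nonneg hd'.le (Int.ediv_nonneg (by omega) hd'.le)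
  have hy : y ∈ L := hmid a ha.1 y hcy.le (by omega) (by simp [y])
  refine isAAMP_of_forall_modEq hd' hy hm0 (dvd_mul_right _ _) (fun l hl => ?_)
    fun l₀ hl₀ l hl => hmid l₀ hl₀ l (hcy.le.trans hl.1) (hl.2.trans (by omega))
  have := ha.2 hl
  have := hb.2 hl
  push_cast
  exact ⟨by omega, by omega⟩

lemma isAAMP_natCast_of_forall_le_add {L : Set ℕ} (hd : 0 < d) (hL : L.Nonempty)
    (hdiam : ∀ k ∈ L, ∀ l ∈ L, l ≤ k + N) : IsAAMP ((fun k : ℕ => (k : ℤ)) '' L) d N := by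
  refine isAAMP_of_subset_Icc hd ⟨_, Nat.sInf_mem hL, rfl⟩ ?_
  rintro _ ⟨l, hl, rfl⟩
  have := hdiam _ (Nat.sInf_mem hL) l hl
  exact ⟨Int.ofNat_le.2 (Nat.sInf_le hl), by dsimp only; omega⟩

lemma isAAMP_natCast_of_forall_interior {L : Set ℕ} {c d : ℕ} (hd : 0 < d) (hL : L.Nonempty)
    (hfin : L.Finite) (hmid : ∀ a ∈ L, ∀ b ∈ L, ∀ l₀ ∈ L, ∀ l, a + c ≤ l → l + c ≤ b →
      l ≡ l₀ [MOD d] → l ∈ L) :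
    IsAAMP ((fun k : ℕ => (k : ℤ)) '' L) d (2 * c + d) := by
  obtain ⟨a, ha⟩ : ∃ a, IsLeast L a := ⟨_, Nat.sInf_mem hL, fun _ => Nat.sInf_le⟩
  obtain ⟨b, hb⟩ : ∃ b, IsGreatest L b :=
    ⟨_, Nat.sSup_mem hL hfin.bddAbove, fun _ => le_csSup hfin.bddAbove⟩
  refine isAAMP_of_forall_interior hd (Nat.mono_cast.map_isLeast ha)
    (Nat.mono_cast.map_isGreatest hb) ?_
  rintro _ ⟨l₀, hl₀, rfl⟩ l hal hlb hll₀
  lift l to ℕ using by omega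
  exact ⟨l, hmid a ha.1 b hb.1 l₀ hl₀ l (by omega) (by omega) (Int.natCast_modEq_iff.1 hll₀), rfl⟩

end AAMP

section ZeroSumAAMP

variable {G : Type*} [CommGroup G] {D : ℕ}

lemma mem_zsSetOfLengths_nsmul_add {G₀ : Set G} {s t : Multiset G} {d m p q l M : ℕ}
    (hD : ∀ u, IsZeroSumAtom G₀ u → card u ≤ D) (hM : D * D < M) (hd : 0 < d)
    (hm : m ∈ zsSetOfLengths G₀ s) (hmd : m + d ∈ zsSetOfLengths G₀ s)
    (hp : p ∈ zsSetOfLengths G₀ t) (hq : q ∈ zsSetOfLengths G₀ t)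
    (hpl : p + M * m + M ≤ l) (hlq : l < q + M * m)
    (hmod : ∀ k ∈ zsSetOfLengths G₀ (M • s + t), k ≡ l [MOD d]) :
    l ∈ zsSetOfLengths G₀ (M • s + t) := by
  obtain ⟨c, hc, hlc, hcl⟩ :=
    exists_mem_zsSetOfLengths_gap_le hD hp hq (p := l - M * m - M) (by omega) (by omega)
  have hMm : M * m ∈ zsSetOfLengths G₀ (M • s) := by
    simpa using nsmul_mem_zsSetOfLengths hm hmd (Nat.zero_le M)
  -- `M • s` has all the lengths `M * m + r * d` with `r ≤ M`, a progression longer than the gaps of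
  -- the set of lengths of `t`.
  obtain ⟨r, hr⟩ : d ∣ l - (M * m + c) :=
    (Nat.modEq_iff_dvd' (by omega)).1 (hmod _ (add_mem_zsSetOfLengths hMm hc))
  have hrM : r ≤ M := (Nat.le_mul_of_pos_left r hd).trans (by omega)
  convert add_mem_zsSetOfLengths (nsmul_mem_zsSetOfLengths hm hmd hrM) hc using 1
  rw [mul_comm r d]
  omega

variable [DecidableEq G] {G₀ : Finset G} {s : Multiset G} {k K : ℕ}

lemma exists_split_support_of_mem_zsSetOfLengths
    (hD : ∀ u : Multiset G, IsZeroSumAtom Set.univ u → card u ≤ D)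
    (hs : card (s.filter (· ∉ G₀)) ≤ K) (hk : k ∈ zsSetOfLengths Set.univ s) :
    ∃ v t, s = v + t ∧ card v ≤ D * K ∧
      ∃ i ∈ zsSetOfLengths Set.univ v, ∃ j ∈ zsSetOfLengths (G₀ : Set G) t, i + j = k ∧ i ≤ K := by
  obtain ⟨v, t, rfl, hv, i, hi, j, hj, rfl, hiK⟩ :=
    exists_split_of_mem_zsSetOfLengths hk (filter_le (· ∉ G₀) s)
  have ht : ∀ g ∈ t, g ∈ G₀ := by
    intro g hg
    by_contra hgG
    have := count_le_of_le g hv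
    rw [count_filter_of_pos (p := (· ∉ G₀)) hgG, count_add] at this
    exact this.not_gt (lt_add_of_pos_right _ (count_pos.2 hg))
  refine ⟨v, t, rfl, ?_, i, hi, j, zsSetOfLengths_subset ht hj, rfl, hiK.trans hs⟩
  exact (card_le_mul_of_mem_zsSetOfLengths hD hi).trans (Nat.mul_le_mul_left D (hiK.trans hs))

lemma le_add_of_mem_zsSetOfLengths_of_lengthDifferences_eq_bot {l : ℕ}
    (hD : ∀ u : Multiset G, IsZeroSumAtom Set.univ u → card u ≤ D)
    (hbot : lengthDifferences (G₀ : Set G) = ⊥) (hs : card (s.filter (· ∉ G₀)) ≤ K)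
    (hk : k ∈ zsSetOfLengths Set.univ s) (hl : l ∈ zsSetOfLengths Set.univ s) :
    l ≤ k + D * K := by
  obtain ⟨v, t, rfl, hv, i, -, j, hj, rfl, -⟩ :=
    exists_split_support_of_mem_zsSetOfLengths hD hs hk
  have ht := isZeroSumSeq_of_mem_zsSetOfLengths hj
  obtain ⟨n, hn, hln, -⟩ := exists_mem_zsSetOfLengths_right_near hD hl ⟨fun _ _ => trivial, ht.2⟩
  have hnj : (n - j : ℤ) ∈ lengthDifferences (G₀ : Set G) :=
    ⟨t, n, zsSetOfLengths_subset ht.1 hn, j, hj, rfl⟩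
  rw [hbot, AddSubgroup.mem_bot] at hnj
  omega

lemma nsmul_le_of_forall_mul_card_le_count {α : Type*} [DecidableEq α] {t w : Multiset α} {M : ℕ}
    (h : ∀ x ∈ t, M * card t ≤ count x w) : M • t ≤ w := by
  refine le_iff_count.2 fun x => ?_
  rw [count_nsmul]
  by_cases hx : x ∈ t
  · exact (Nat.mul_le_mul_left M (count_le_card x t)).trans (h x hx)
  · simp [hx]

lemma mem_zsSetOfLengths_of_modEq {t : Multiset G} {a b l₀ l d m M c e : ℕ}
    (hD : ∀ u : Multiset G, IsZeroSumAtom Set.univ u → card u ≤ D) (hM : D * D < M)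
    (hd : IsLeast {n | n ∈ lengthDifferences (G₀ : Set G) ∧ 0 < n} (d : ℤ))
    (hm : m ∈ zsSetOfLengths (G₀ : Set G) t) (hmd : m + d ∈ zsSetOfLengths (G₀ : Set G) t)
    (hs : card (s.filter (· ∉ G₀)) ≤ K) (hcount : ∀ g ∈ G₀, e ≤ count g s)
    (he : D * K + M * card t ≤ e) (hc : K + M * m + M + (D + 1) * e ≤ c)
    (ha : a ∈ zsSetOfLengths Set.univ s) (hb : b ∈ zsSetOfLengths Set.univ s)
    (hl₀ : l₀ ∈ zsSetOfLengths Set.univ s) (hal : a + c ≤ l) (hlb : l + c ≤ b)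
    (hll₀ : l ≡ l₀ [MOD d]) : l ∈ zsSetOfLengths Set.univ s := by
  obtain ⟨v, w, rfl, hv, i, hi, j, hj, rfl, hiK⟩ :=
    exists_split_support_of_mem_zsSetOfLengths hD hs hl₀
  have hle : M • t ≤ w := nsmul_le_of_forall_mul_card_le_count fun g hg => by
    have hgs := hcount g ((isZeroSumSeq_of_mem_zsSetOfLengths hm).1 g hg)
    have hgv := count_le_card g v
    rw [count_add] at hgs
    omega
  obtain ⟨r, rfl⟩ := Multiset.le_iff_exists_add.1 hle
  have hr : IsZeroSumSeq (G₀ : Set G) r :=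
    (isZeroSumSeq_of_mem_zsSetOfLengths hj).of_add_left
      (by rw [prod_nsmul, (isZeroSumSeq_of_mem_zsSetOfLengths hm).2, one_pow])
  rw [← add_assoc] at ha hb
  have hcard : card (v + M • t) ≤ e := by
    rw [card_add, card_nsmul]
    exact (Nat.add_le_add_right hv _).trans he
  obtain ⟨p, hp, -, hpa⟩ := exists_mem_zsSetOfLengths_right_near hD ha ⟨fun _ _ => trivial, hr.2⟩
  obtain ⟨q, hq, hbq, -⟩ := exists_mem_zsSetOfLengths_right_near hD hb ⟨fun _ _ => trivial, hr.2⟩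
  have hDe := Nat.mul_le_mul_left D hcard
  rw [add_one_mul] at hc
  have hlj : l - i ∈ zsSetOfLengths (G₀ : Set G) (M • t + r) := by
    refine mem_zsSetOfLengths_nsmul_add (fun u hu => hD u (hu.of_forall_mem fun _ _ => trivial)) hM
      (mod_cast hd.1.2) hm hmd (zsSetOfLengths_subset hr.1 hp) (zsSetOfLengths_subset hr.1 hq)
      (by omega) (by omega) fun k hk => (modEq_of_mem_zsSetOfLengths hd hk hj).trans ?_
    refine Nat.ModEq.add_left_cancel' i ?_
    rw [Nat.add_sub_cancel' (by omega)]
    exact hll₀.symm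
  convert add_mem_zsSetOfLengths hi (zsSetOfLengths_subset (fun _ _ => trivial) hlj) using 1
  omega

lemma exists_isAAMP_of_forall_le_count (hG : 3 ≤ Nat.card G)
    (hD : ∀ u : Multiset G, IsZeroSumAtom Set.univ u → card u ≤ D) (G₀ : Finset G) (K : ℕ) :
    ∃ e N, ∀ s : Multiset G, s.prod = 1 → card (s.filter (· ∉ G₀)) ≤ K →
      (∀ g ∈ G₀, e ≤ count g s) → ∃ d ∈ deltaStar G,
        IsAAMP ((fun k : ℕ => (k : ℤ)) '' zsSetOfLengths Set.univ s) d N := by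
  by_cases hbot : lengthDifferences (G₀ : Set G) = ⊥
  · refine ⟨0, D * K, fun s hs hK _ => ⟨1, one_mem_deltaStar_of_three_le_card hG, ?_⟩⟩
    exact isAAMP_natCast_of_forall_le_add one_pos
      (IsZeroSumSeq.zsSetOfLengths_nonempty ⟨fun _ _ => trivial, hs⟩) fun k hk l hl =>
        le_add_of_mem_zsSetOfLengths_of_lengthDifferences_eq_bot hD hbot hK hk hl
  obtain ⟨d, hd⟩ := exists_isLeast_pos_lengthDifferences hbot
  obtain ⟨t, n, hmd, m, hm, hmn⟩ := hd.1.1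
  obtain rfl : n = m + d := by omega
  set M := D * D + 1
  set e := D * K + M * card t
  set c := K + M * m + M + (D + 1) * e
  refine ⟨e, 2 * c + d, fun s hs hK hcount => ⟨d, ⟨G₀, isLeast_zsDelta hd⟩, ?_⟩⟩
  exact isAAMP_natCast_of_forall_interior (mod_cast hd.1.2)
    (IsZeroSumSeq.zsSetOfLengths_nonempty ⟨fun _ _ => trivial, hs⟩) (finite_zsSetOfLengths _ s)
    fun a ha b hb l₀ hl₀ l hal hlb hll₀ => mem_zsSetOfLengths_of_modEq hD (Nat.lt_succ_self _) hd
      hm hmd hK hcount le_rfl le_rfl ha hb hl₀ hal hlb hll₀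

lemma exists_forall_isAAMP_of_card_filter_notMem_le (hG : 3 ≤ Nat.card G)
    (hD : ∀ u : Multiset G, IsZeroSumAtom Set.univ u → card u ≤ D) (G₀ : Finset G) (K : ℕ) :
    ∃ N, ∀ s : Multiset G, s.prod = 1 → card (s.filter (· ∉ G₀)) ≤ K → ∃ d ∈ deltaStar G,
      IsAAMP ((fun k : ℕ => (k : ℤ)) '' zsSetOfLengths Set.univ s) d N := by
  induction G₀ using Finset.strongInduction generalizing K with | _ G₀ ih
  obtain ⟨e, N₀, hN₀⟩ := exists_isAAMP_of_forall_le_count hG hD G₀ K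
  have hrec (g : G) : ∃ N, g ∈ G₀ → ∀ s : Multiset G, s.prod = 1 →
      card (s.filter (· ∉ G₀.erase g)) ≤ K + e → ∃ d ∈ deltaStar G,
        IsAAMP ((fun k : ℕ => (k : ℤ)) '' zsSetOfLengths Set.univ s) d N := by
    by_cases hg : g ∈ G₀
    · obtain ⟨N, hN⟩ := ih (G₀.erase g) (Finset.erase_ssubset hg) (K + e)
      exact ⟨N, fun _ => hN⟩
    · exact ⟨0, fun h => absurd h hg⟩
  choose N hN using hrec
  refine ⟨max N₀ (G₀.sup N), fun s hs hK => ?_⟩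
  by_cases hcount : ∀ g ∈ G₀, e ≤ count g s
  · obtain ⟨d, hd, hL⟩ := hN₀ s hs hK hcount
    exact ⟨d, hd, hL.mono (le_max_left _ _)⟩
  · push Not at hcount
    obtain ⟨g, hg, hge⟩ := hcount
    -- Deleting the rare element `g` from `G₀` costs at most `e` further terms outside.
    have hK' : card (s.filter (· ∉ G₀.erase g)) ≤ K + e := calc
      card (s.filter (· ∉ G₀.erase g))
      _ ≤ card (s.filter (fun x => x ∉ G₀ ∨ g = x)) := card_le_card <|
        monotone_filter_right s fun x hx => by
          by_contra! h
          exact hx (Finset.mem_erase.2 ⟨h.2.symm, h.1⟩)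
      _ ≤ card (s.filter (· ∉ G₀)) + card (s.filter (g = ·)) := by
        rw [← card_add, filter_add_filter]
        exact card_le_card (Multiset.le_add_right _ _)
      _ ≤ K + e := by
        rw [← count_eq_card_filter_eq]
        exact add_le_add hK hge.le
    obtain ⟨d, hd, hL⟩ := hN g hg s hs hK'
    exact ⟨d, hd, hL.mono ((Finset.le_sup hg).trans (le_max_right _ _))⟩

theorem exists_forall_isAAMP_zsSetOfLengths (G : Type*) [CommGroup G] (hG : 3 ≤ Nat.card G) :
    ∃ N, ∀ s : Multiset G, s.prod = 1 → ∃ d ∈ deltaStar G,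
      IsAAMP ((fun k : ℕ => (k : ℤ)) '' zsSetOfLengths Set.univ s) d N := by
  classical
  have : Finite G := Nat.finite_of_card_ne_zero (by omega)
  have : Fintype G := Fintype.ofFinite G
  obtain ⟨N, hN⟩ := exists_forall_isAAMP_of_card_filter_notMem_le hG
    (fun u hu => hu.card_le_sum_orderOf) Finset.univ 0
  exact ⟨N, fun s hs => hN s hs (by simp)⟩

end ZeroSumAAMP

section SetOfLengths

variable {M : Type*} [CommMonoid M] {a : M} {k : ℕ}

lemma zero_mem_setOfLengths : 0 ∈ setOfLengths a ↔ a = 1 := by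
  simp [setOfLengths, eq_comm]

lemma succ_mem_setOfLengths :
    k + 1 ∈ setOfLengths a ↔ ∃ u b, Irreducible u ∧ k ∈ setOfLengths b ∧ a = u * b := by
  constructor
  · rintro ⟨s, hs, hcard, rfl⟩
    obtain ⟨u, hu⟩ := card_pos_iff_exists_mem.1 (by omega : 0 < card s)
    obtain ⟨s, rfl⟩ := exists_cons_of_mem hu
    exact ⟨u, s.prod, hs u hu,
      ⟨s, fun v hv => hs v (mem_cons_of_mem hv), by simpa using hcard, rfl⟩, prod_cons u s⟩
  · rintro ⟨u, _, hu, ⟨s, hs, rfl, rfl⟩, rfl⟩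
    exact ⟨u ::ₘ s, forall_mem_cons.2 ⟨hu, hs⟩, card_cons u s, prod_cons u s⟩

lemma one_mem_setOfLengths : 1 ∈ setOfLengths a ↔ Irreducible a := by
  simp [succ_mem_setOfLengths (k := 0), zero_mem_setOfLengths]

end SetOfLengths

section BlockHomomorphism

lemma exists_add_of_map_eq_add {α β : Type*} {f : α → β} {s : Multiset α} {t u : Multiset β}
    (h : s.map f = t + u) : ∃ v w, s = v + w ∧ v.map f = t ∧ w.map f = u := by
  rw [← rel_eq, rel_map_left, rel_add_right] at h
  obtain ⟨v, w, hv, hw, rfl⟩ := h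
  exact ⟨v, w, rfl, rel_eq.1 (rel_map_left.2 hv), rel_eq.1 (rel_map_left.2 hw)⟩

open UniqueFactorizationMonoid

variable {R : Type*} [CommRing R] [IsDedekindDomain R] {I J : Ideal R} {a b : R}

open Classical in
/-- The class of an ideal, extending `ClassGroup.mk0` by the junk value `1` at the zero ideal. -/
noncomputable def idealClass (I : Ideal R) : ClassGroup R :=
  if hI : I = 0 then 1 else ClassGroup.mk0 ⟨I, mem_nonZeroDivisors_of_ne_zero hI⟩

lemma idealClass_eq_one (hI : I ≠ 0) : idealClass I = 1 ↔ I.IsPrincipal := by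
  rw [idealClass, dif_neg hI, ClassGroup.mk0_eq_one_iff]

lemma idealClass_mul (hI : I ≠ 0) (hJ : J ≠ 0) :
    idealClass (I * J) = idealClass I * idealClass J := by
  rw [idealClass, idealClass, idealClass, dif_neg hI, dif_neg hJ, dif_neg (mul_ne_zero hI hJ),
    ← map_mul]
  rfl

lemma prod_map_idealClass {s : Multiset (Ideal R)} (hs : 0 ∉ s) :
    (s.map idealClass).prod = idealClass s.prod := by
  induction s using Multiset.induction with
  | empty => simpa using ((idealClass_eq_one one_ne_zero).2 ⟨1, by simp⟩).symm
  | cons I s ih =>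
    rw [mem_cons, not_or] at hs
    rw [map_cons, prod_cons, prod_cons, ih hs.2,
      idealClass_mul (Ne.symm hs.1) (prod_ne_zero hs.2)]

/-- The block homomorphism `R ∖ {0} → B(Cl(R))`, sending `a` to the multiset of classes of the
prime ideals in the factorization of `(a)`. -/
noncomputable def block (a : R) : Multiset (ClassGroup R) :=
  (normalizedFactors (Ideal.span {a})).map idealClass

lemma isZeroSumSeq_block (ha : a ≠ 0) : IsZeroSumSeq Set.univ (block a) := by
  have ha' : Ideal.span {a} ≠ 0 := by simpa
  refine ⟨fun _ _ => trivial, ?_⟩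
  rw [block, prod_map_idealClass (zero_notMem_normalizedFactors _),
    Ideal.prod_normalizedFactors_eq_self ha', idealClass_eq_one ha']
  exact ⟨a, rfl⟩

lemma block_mul (ha : a ≠ 0) (hb : b ≠ 0) : block (a * b) = block a + block b := by
  rw [block, ← Ideal.span_singleton_mul_span_singleton,
    normalizedFactors_mul (by simpa) (by simpa), Multiset.map_add, block, block]

lemma block_eq_zero (ha : a ≠ 0) : block a = 0 ↔ IsUnit a := by
  rw [block, Multiset.map_eq_zero, normalizedFactors_eq_zero_iff (by simpa), Ideal.isUnit_iff,
    Ideal.span_singleton_eq_top]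

lemma exists_block_eq_of_le_normalizedFactors {s : Multiset (Ideal R)}
    (hs : s ≤ normalizedFactors I) (hprod : (s.map idealClass).prod = 1) :
    ∃ b : R, s.prod = Ideal.span {b} ∧ block b = s.map idealClass := by
  have h0 : 0 ∉ s := fun h => zero_notMem_normalizedFactors I (mem_of_le hs h)
  rw [prod_map_idealClass h0, idealClass_eq_one (prod_ne_zero h0)] at hprod
  obtain ⟨b, hb : s.prod = Ideal.span {b}⟩ := hprod
  refine ⟨b, hb, ?_⟩
  rw [block, ← hb, normalizedFactors_prod_of_prime fun P hP =>
    prime_of_normalized_factor P (mem_of_le hs hP)]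

lemma exists_mul_of_block_eq_add {t u : Multiset (ClassGroup R)} (ha : a ≠ 0)
    (hblock : block a = t + u) (ht : t.prod = 1) :
    ∃ b c, a = b * c ∧ block b = t ∧ block c = u := by
  obtain ⟨v, w, hvw, rfl, rfl⟩ := exists_add_of_map_eq_add hblock
  have hu : (w.map idealClass).prod = 1 := ((hblock ▸ isZeroSumSeq_block ha).of_add_left ht).2
  obtain ⟨b, hb, hbv⟩ :=
    exists_block_eq_of_le_normalizedFactors (hvw ▸ Multiset.le_add_right v w) ht
  obtain ⟨c, hc, hcw⟩ :=
    exists_block_eq_of_le_normalizedFactors (hvw ▸ Multiset.le_add_left w v) hu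
  have hspan : Ideal.span {b * c} = Ideal.span {a} := by
    rw [← Ideal.span_singleton_mul_span_singleton, ← hb, ← hc, ← prod_add, ← hvw,
      Ideal.prod_normalizedFactors_eq_self (by simpa)]
  obtain ⟨ε, hε⟩ := Ideal.span_singleton_eq_span_singleton.1 hspan
  refine ⟨b, c * ε, by rw [← hε, mul_assoc], hbv, ?_⟩
  rw [← hcw, block, Ideal.span_singleton_mul_right_unit ε.isUnit, block]

lemma irreducible_iff_isZeroSumAtom_block (ha : a ≠ 0) :
    Irreducible a ↔ IsZeroSumAtom Set.univ (block a) := by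
  constructor
  · refine fun hirr => ⟨isZeroSumSeq_block ha, mt (block_eq_zero ha).1 hirr.not_isUnit,
      fun t u ht _ ht0 hu0 hadd => ?_⟩
    obtain ⟨b, c, rfl, rfl, rfl⟩ := exists_mul_of_block_eq_add ha hadd ht.2
    rw [Ne, block_eq_zero (left_ne_zero_of_mul ha)] at ht0
    rw [Ne, block_eq_zero (right_ne_zero_of_mul ha)] at hu0
    exact (hirr.isUnit_or_isUnit rfl).elim ht0 hu0
  · refine fun hatom => ⟨mt (block_eq_zero ha).2 hatom.2.1, fun b c hbc => ?_⟩
    subst hbc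
    have hb := left_ne_zero_of_mul ha
    have hc := right_ne_zero_of_mul ha
    rw [← block_eq_zero hb, ← block_eq_zero hc]
    by_contra! h
    exact hatom.2.2 _ _ (isZeroSumSeq_block hb) (isZeroSumSeq_block hc) h.1 h.2 (block_mul hb hc)

lemma succ_mem_setOfLengths_iff_block {k : ℕ} (ha : a ≠ 0) :
    k + 1 ∈ setOfLengths a ↔ k + 1 ∈ zsSetOfLengths Set.univ (block a) := by
  induction k generalizing a with
  | zero =>
    rw [zero_add, one_mem_setOfLengths, one_mem_zsSetOfLengths,
      irreducible_iff_isZeroSumAtom_block ha]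
  | succ k ih =>
    rw [succ_mem_setOfLengths, succ_mem_zsSetOfLengths]
    constructor
    · rintro ⟨u, b, hu, hb, rfl⟩
      have hu0 := left_ne_zero_of_mul ha
      have hb0 := right_ne_zero_of_mul ha
      exact ⟨block u, block b, (irreducible_iff_isZeroSumAtom_block hu0).1 hu, (ih hb0).1 hb,
        block_mul hu0 hb0⟩
    · rintro ⟨t, s, ht, hs, hblock⟩
      obtain ⟨u, b, rfl, rfl, rfl⟩ := exists_mul_of_block_eq_add ha hblock ht.1.2
      exact ⟨u, b, (irreducible_iff_isZeroSumAtom_block (left_ne_zero_of_mul ha)).2 ht,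
        (ih (right_ne_zero_of_mul ha)).2 hs, rfl⟩

lemma setOfLengths_eq_zsSetOfLengths_block (ha : a ≠ 0) (hunit : ¬ IsUnit a) :
    setOfLengths a = zsSetOfLengths Set.univ (block a) := by
  ext k
  cases k with
  | zero =>
    rw [zero_mem_setOfLengths, zero_mem_zsSetOfLengths, block_eq_zero ha]
    exact iff_of_false (fun h => hunit (h ▸ isUnit_one)) hunit
  | succ k => exact succ_mem_setOfLengths_iff_block ha

end BlockHomomorphism

theorem setOfLengths_is_AAMP_general {R : Type*} [CommRing R] [IsDedekindDomain R]
    (hcard : 3 ≤ Nat.card (ClassGroup R)) :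
    ∃ N : ℕ, ∀ a : R, a ≠ 0 → ¬ IsUnit a →
      ∃ d ∈ deltaStar (ClassGroup R),
        IsAAMP ((fun k : ℕ => (k : ℤ)) '' setOfLengths a) d N := by
  obtain ⟨N, hN⟩ := exists_forall_isAAMP_zsSetOfLengths (ClassGroup R) hcard
  refine ⟨N, fun a ha hunit => ?_⟩
  rw [setOfLengths_eq_zsSetOfLengths_block ha hunit]
  exact hN (block a) (isZeroSumSeq_block ha).2

/-- **Corollary 4.4(1).** Let `R` be a Dedekind domain, not a field, whose class group is
finite of order at least `3` and such that every class contains infinitely many nonzero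
prime ideals. Then there is a bound `N` such that every set of lengths of `R` is an AAMP
with some difference `d ∈ Δ*(Cl(R))` and bound `N`. -/
theorem setOfLengths_is_AAMP {R : Type*} [CommRing R] [IsDedekindDomain R]
    (hR : ¬ IsField R) (hfin : Finite (ClassGroup R)) (hcard : 3 ≤ Nat.card (ClassGroup R))
    (hprimes : ∀ g : ClassGroup R,
      {P : (Ideal R)⁰ | (P : Ideal R).IsPrime ∧ ClassGroup.mk0 P = g}.Infinite) :
    ∃ N : ℕ, ∀ a : R, a ≠ 0 → ¬ IsUnit a →
      ∃ d ∈ deltaStar (ClassGroup R),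
        IsAAMP ((fun k : ℕ => (k : ℤ)) '' setOfLengths a) d N := by
  exact setOfLengths_is_AAMP_general hcard
end
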